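/- arXiv:2008.13179 — 5 statements merged into one kernel-verified Lean document; each statement's English description precedes it below -/
import Mathlib

section
/- Under the Setup, if equations (36a), (36b), (36c) hold on O, then equations (N.9a), (N.9b), (N.9c) hold on O. -/
open Real

/-- Partial derivative in the first coordinate `ϖ`. -/
noncomputable def d1 (f : ℝ × ℝ → ℝ) : ℝ × ℝ → ℝ := fun p => fderiv ℝ f p (1, 0)

/-- Partial derivative in the second coordinate `z`. -/
noncomputable def d3 (f : ℝ × ℝ → ℝ) : ℝ × ℝ → ℝ := fun p => fderiv ℝ f p (0, 1)

/-- `g` is differentiable at `p` with directional derivative `g'` along `v`. -/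
def HD (v : ℝ × ℝ) (g : ℝ × ℝ → ℝ) (g' : ℝ) (p : ℝ × ℝ) : Prop :=
  DifferentiableAt ℝ g p ∧ fderiv ℝ g p v = g'

theorem HD.mul {v p : ℝ × ℝ} {g h : ℝ × ℝ → ℝ} {g' h' : ℝ} (hg : HD v g g' p) (hh : HD v h h' p) :
    HD v (fun q => g q * h q) (g' * h p + g p * h') p := by
  refine ⟨hg.1.mul hh.1, ?_⟩
  change fderiv ℝ (g * h) p v = _
  rw [(hg.1.hasFDerivAt.mul hh.1.hasFDerivAt).fderiv]
  simp [hg.2, hh.2]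
  ring

theorem HD.add {v p : ℝ × ℝ} {g h : ℝ × ℝ → ℝ} {g' h' : ℝ} (hg : HD v g g' p) (hh : HD v h h' p) :
    HD v (fun q => g q + h q) (g' + h') p := by
  refine ⟨hg.1.add hh.1, ?_⟩
  change fderiv ℝ (g + h) p v = _
  rw [(hg.1.hasFDerivAt.add hh.1.hasFDerivAt).fderiv]
  simp [hg.2, hh.2]

theorem HD.neg {v p : ℝ × ℝ} {g : ℝ × ℝ → ℝ} {g' : ℝ} (hg : HD v g g' p) :
    HD v (fun q => - g q) (- g') p := by
  refine ⟨hg.1.neg, ?_⟩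
  change fderiv ℝ (-g) p v = _
  rw [hg.1.hasFDerivAt.neg.fderiv]
  simp [hg.2]

theorem HD.cmul {v p : ℝ × ℝ} {g : ℝ × ℝ → ℝ} {g' : ℝ} (a : ℝ) (hg : HD v g g' p) :
    HD v (fun q => a * g q) (a * g') p := by
  refine ⟨hg.1.const_mul a, ?_⟩
  rw [(hg.1.hasFDerivAt.const_mul a).fderiv]
  simp [hg.2]

theorem HD.exp {v p : ℝ × ℝ} {g : ℝ × ℝ → ℝ} {g' : ℝ} (hg : HD v g g' p) :
    HD v (fun q => Real.exp (g q)) (Real.exp (g p) * g') p := by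
  refine ⟨hg.1.exp, ?_⟩
  rw [hg.1.hasFDerivAt.exp.fderiv]
  simp [hg.2]

theorem HD.sq {v p : ℝ × ℝ} {g : ℝ × ℝ → ℝ} {g' : ℝ} (hg : HD v g g' p) :
    HD v (fun q => g q ^ 2) (2 * g p * g') p := by
  have h := hg.mul hg
  have e : (fun q => g q ^ 2) = fun q => g q * g q := by funext q; ring
  rw [e]
  exact ⟨h.1, by rw [h.2]; ring⟩

theorem HD.div {v p : ℝ × ℝ} {g h : ℝ × ℝ → ℝ} {g' h' : ℝ} (hg : HD v g g' p) (hh : HD v h h' p)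
    (h0 : h p ≠ 0) :
    HD v (fun q => g q / h q) (g' / h p - g p * h' / h p ^ 2) p := by
  have hd : DifferentiableAt ℝ (fun q => g q / h q) p := by
    simp only [div_eq_mul_inv]
    exact hg.1.mul (hh.1.inv h0)
  refine ⟨hd, ?_⟩
  -- differentiate `g = (g / h) * h`
  have hx : HD v (fun q => g q / h q) (fderiv ℝ (fun q => g q / h q) p v) p := ⟨hd, rfl⟩
  have hm := hx.mul hh
  have ev : (fun q => g q / h q * h q) =ᶠ[nhds p] g := by
    filter_upwards [hh.1.continuousAt.eventually_ne h0] with q hq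
    exact div_mul_cancel₀ _ hq
  have h2 := hm.2
  rw [ev.fderiv_eq, hg.2] at h2
  rw [h2]
  field_simp
  ring

theorem HD.congr {v p : ℝ × ℝ} {g h : ℝ × ℝ → ℝ} {g' : ℝ} (hg : HD v g g' p)
    (ev : h =ᶠ[nhds p] g) : HD v h g' p :=
  ⟨hg.1.congr_of_eventuallyEq ev, by rw [ev.fderiv_eq]; exact hg.2⟩

theorem hd_c2 {O : Set (ℝ × ℝ)} (hO : IsOpen O) {F : ℝ × ℝ → ℝ} (hF : ContDiffOn ℝ 2 F O)
    (v p : ℝ × ℝ) (hp : p ∈ O) :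
    HD v F (fderiv ℝ F p v) p ∧
      HD v (fun q => fderiv ℝ F q v) (fderiv ℝ (fun q => fderiv ℝ F q v) p v) p := by
  have h : ContDiffAt ℝ 2 F p := hF.contDiffAt (hO.mem_nhds hp)
  refine ⟨⟨h.differentiableAt (by norm_num), rfl⟩, ⟨?_, rfl⟩⟩
  have h1 : ContDiffAt ℝ 1 (fderiv ℝ F) p := h.fderiv_right (by norm_num)
  exact (h1.differentiableAt (by norm_num)).clm_apply (differentiableAt_const v)

/-- First and second derivatives of `f`, `k`, `l` along `v`. -/
theorem expand {O : Set (ℝ × ℝ)} (hO : IsOpen O) {F A Pt : ℝ × ℝ → ℝ}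
    (hF : ContDiffOn ℝ 2 F O) (hA : ContDiffOn ℝ 2 A O) (hPt : ContDiffOn ℝ 2 Pt O)
    (hPtpos : ∀ p ∈ O, 0 < Pt p) {f k l : ℝ × ℝ → ℝ}
    (hf : f = fun p => exp (2 * F p))
    (hk : k = fun p => -exp (2 * F p) * A p)
    (hl : l = fun p => -exp (2 * F p) * (A p) ^ 2 + exp (-(2 * F p)) * (Pt p) ^ 2)
    (v : ℝ × ℝ) {d : (ℝ × ℝ → ℝ) → ℝ × ℝ → ℝ} (hd : ∀ g, d g = fun q => fderiv ℝ g q v)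
    (p : ℝ × ℝ) (hp : p ∈ O) (e J : ℝ) (he : e = exp (2 * F p)) (hJ : J = exp (-(2 * F p))) :
    d f p = 2 * e * d F p ∧
    d k p = -2 * e * d F p * A p - e * d A p ∧
    d l p = -2 * e * d F p * A p ^ 2 - 2 * e * A p * d A p - 2 * J * d F p * Pt p ^ 2
      + 2 * J * Pt p * d Pt p ∧
    d (fun q => d f q / Pt q) p = (4 * e * d F p ^ 2 + 2 * e * d (d F) p) / Pt p
      - 2 * e * d F p * d Pt p / Pt p ^ 2 ∧
    d (fun q => d k q / Pt q) p = (-4 * e * d F p ^ 2 * A p - 2 * e * d (d F) p * A p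
        - 4 * e * d F p * d A p - e * d (d A) p) / Pt p
      - (-2 * e * d F p * A p - e * d A p) * d Pt p / Pt p ^ 2 ∧
    d (fun q => d l q / Pt q) p = (-4 * e * d F p ^ 2 * A p ^ 2 - 2 * e * d (d F) p * A p ^ 2
        - 8 * e * d F p * A p * d A p - 2 * e * d A p ^ 2 - 2 * e * A p * d (d A) p
        + 4 * J * d F p ^ 2 * Pt p ^ 2 - 2 * J * d (d F) p * Pt p ^ 2
        - 8 * J * d F p * Pt p * d Pt p + 2 * J * d Pt p ^ 2 + 2 * J * Pt p * d (d Pt) p) / Pt p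
      - (-2 * e * d F p * A p ^ 2 - 2 * e * A p * d A p - 2 * J * d F p * Pt p ^ 2
      + 2 * J * Pt p * d Pt p) * d Pt p / Pt p ^ 2 := by
  have F1 : ∀ q ∈ O, HD v F (d F q) q := fun q hq => by
    rw [hd]; exact (hd_c2 hO hF v q hq).1
  have A1 : ∀ q ∈ O, HD v A (d A q) q := fun q hq => by
    rw [hd]; exact (hd_c2 hO hA v q hq).1
  have P1 : ∀ q ∈ O, HD v Pt (d Pt q) q := fun q hq => by
    rw [hd]; exact (hd_c2 hO hPt v q hq).1
  have F2 : HD v (d F) (d (d F) p) p := by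
    simp only [hd]; exact (hd_c2 hO hF v p hp).2
  have A2 : HD v (d A) (d (d A) p) p := by
    simp only [hd]; exact (hd_c2 hO hA v p hp).2
  have P2 : HD v (d Pt) (d (d Pt) p) p := by
    simp only [hd]; exact (hd_c2 hO hPt v p hp).2
  have E1 : ∀ q ∈ O, HD v (fun q => exp (2 * F q)) _ q := fun q hq => ((F1 q hq).cmul 2).exp
  have J1 : ∀ q ∈ O, HD v (fun q => exp (-(2 * F q))) _ q :=
    fun q hq => ((F1 q hq).cmul 2).neg.exp
  have ev : ∀ᶠ q in nhds p, q ∈ O := hO.mem_nhds hp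
  have ap : ∀ {g : ℝ × ℝ → ℝ} {g' : ℝ} {q : ℝ × ℝ}, HD v g g' q → d g q = g' := by
    intro g g' q h
    rw [hd]; exact h.2
  have f1 : ∀ q ∈ O, d f q = 2 * (exp (2 * F q) * d F q) := by
    intro q hq
    rw [hf, ap (E1 q hq)]; ring
  have k1 : ∀ q ∈ O, d k q = -2 * (exp (2 * F q) * d F q * A q) + -(exp (2 * F q) * d A q) := by
    intro q hq
    rw [hk, ap ((E1 q hq).neg.mul (A1 q hq))]; ring
  have l1 : ∀ q ∈ O, d l q = -2 * (exp (2 * F q) * d F q * A q ^ 2)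
      + -2 * (exp (2 * F q) * A q * d A q) + -2 * (exp (-(2 * F q)) * d F q * Pt q ^ 2)
      + 2 * (exp (-(2 * F q)) * Pt q * d Pt q) := by
    intro q hq
    rw [hl, ap (((E1 q hq).neg.mul (A1 q hq).sq).add ((J1 q hq).mul (P1 q hq).sq))]; ring
  have hE := E1 p hp
  have hJ1 := J1 p hp
  have hA1 := A1 p hp
  have hP1 := P1 p hp
  have hP0 := (hPtpos p hp).ne'
  subst he hJ
  refine ⟨?_, ?_, ?_, ?_, ?_, ?_⟩
  · rw [f1 p hp]; ring
  · rw [k1 p hp]; ring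
  · rw [l1 p hp]; ring
  · have h := (((hE.mul F2).cmul 2).congr (ev.mono f1)).div hP1 hP0
    rw [ap h, f1 p hp]; ring
  · have h := (((((hE.mul F2).mul hA1).cmul (-2)).add (hE.mul A2).neg).congr
      (ev.mono k1)).div hP1 hP0
    rw [ap h, k1 p hp]; ring
  · have h := ((((((hE.mul F2).mul hA1.sq).cmul (-2)).add (((hE.mul hA1).mul A2).cmul (-2))).add
      (((hJ1.mul F2).mul hP1.sq).cmul (-2))).add (((hJ1.mul hP1).mul P2).cmul 2)).congr
      (ev.mono l1) |>.div hP1 hP0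
    rw [ap h, l1 p hp]; ring

theorem alg {M κ X P e A w p F1 F3 A1 A3 P1 P3 F11 F33 A11 A33 P11 P33 S Ee Y : ℝ}
    (he : 0 < e) (hp : 0 < p) (hX : X = Y * Ee⁻¹)
    (hS : S = 2 * e * F1 * (-2 * e * F1 * A ^ 2 - 2 * e * A * A1 - 2 * e⁻¹ * F1 * p ^ 2
        + 2 * e⁻¹ * p * P1) + 2 * e * F3 * (-2 * e * F3 * A ^ 2 - 2 * e * A * A3
        - 2 * e⁻¹ * F3 * p ^ 2 + 2 * e⁻¹ * p * P3) + (-2 * e * F1 * A - e * A1) ^ 2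
        + (-2 * e * F3 * A - e * A3) ^ 2)
    (a : 2 * M / p * (κ * (1 / 2 * X * ((e - w * (-e * A)) ^ 2 + w ^ 2 * p ^ 2) + P * e)) =
      ((4 * e * F1 ^ 2 + 2 * e * F11) / p - 2 * e * F1 * P1 / p ^ 2)
      + ((4 * e * F3 ^ 2 + 2 * e * F33) / p - 2 * e * F3 * P3 / p ^ 2) + e * S / p ^ 3)
    (b : -(2 * M / p * (κ * (1 / 2 * X * (-(-e * A * e) - 2 * w * e * (-e * A ^ 2 + e⁻¹ * p ^ 2)
        + w ^ 2 * (-e * A) * (-e * A ^ 2 + e⁻¹ * p ^ 2)) - P * (-e * A)))) =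
      ((-4 * e * F1 ^ 2 * A - 2 * e * F11 * A - 4 * e * F1 * A1 - e * A11) / p
        - (-2 * e * F1 * A - e * A1) * P1 / p ^ 2)
      + ((-4 * e * F3 ^ 2 * A - 2 * e * F33 * A - 4 * e * F3 * A3 - e * A33) / p
        - (-2 * e * F3 * A - e * A3) * P3 / p ^ 2) + (-e * A) * S / p ^ 3)
    (g : -(2 * M / p * (κ * (1 / 2 * X * (p ^ 2 + (-e * A + w * (-e * A ^ 2 + e⁻¹ * p ^ 2)) ^ 2)
        - P * (-e * A ^ 2 + e⁻¹ * p ^ 2)))) =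
      ((-4 * e * F1 ^ 2 * A ^ 2 - 2 * e * F11 * A ^ 2 - 8 * e * F1 * A * A1 - 2 * e * A1 ^ 2
        - 2 * e * A * A11 + 4 * e⁻¹ * F1 ^ 2 * p ^ 2 - 2 * e⁻¹ * F11 * p ^ 2
        - 8 * e⁻¹ * F1 * p * P1 + 2 * e⁻¹ * P1 ^ 2 + 2 * e⁻¹ * p * P11) / p
        - (-2 * e * F1 * A ^ 2 - 2 * e * A * A1 - 2 * e⁻¹ * F1 * p ^ 2 + 2 * e⁻¹ * p * P1)
          * P1 / p ^ 2)
      + ((-4 * e * F3 ^ 2 * A ^ 2 - 2 * e * F33 * A ^ 2 - 8 * e * F3 * A * A3 - 2 * e * A3 ^ 2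
        - 2 * e * A * A33 + 4 * e⁻¹ * F3 ^ 2 * p ^ 2 - 2 * e⁻¹ * F33 * p ^ 2
        - 8 * e⁻¹ * F3 * p * P3 + 2 * e⁻¹ * P3 ^ 2 + 2 * e⁻¹ * p * P33) / p
        - (-2 * e * F3 * A ^ 2 - 2 * e * A * A3 - 2 * e⁻¹ * F3 * p ^ 2 + 2 * e⁻¹ * p * P3)
          * P3 / p ^ 2) + (-e * A ^ 2 + e⁻¹ * p ^ 2) * S / p ^ 3) :
    (F11 + F33 + 1 / p * (P1 * F1 + P3 * F3) + e ^ 2 / (2 * p ^ 2) * (A1 ^ 2 + A3 ^ 2)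
      = κ / 2 * M * (Y * (e * (1 + w * A) ^ 2 + e⁻¹ * w ^ 2 * p ^ 2) / Ee + 2 * P)) ∧
    (A11 + A33 - 1 / p * (P1 * A1 + P3 * A3) + 4 * (F1 * A1 + F3 * A3)
      = -(2 * κ) * M * Y * (e⁻¹ * w * p ^ 2 * (1 + w * A)) / Ee) ∧
    (P11 + P33 = 2 * κ * M * P * p) := by
  have hS' : S = -4 * p ^ 2 * (F1 ^ 2 + F3 ^ 2) + 4 * p * (F1 * P1 + F3 * P3)
      + e ^ 2 * (A1 ^ 2 + A3 ^ 2) := by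
    rw [hS]; field_simp; ring
  subst hS'
  clear hS
  have e0 := he.ne'
  have p0 := hp.ne'
  have r1 : Y * (e * (1 + w * A) ^ 2 + e⁻¹ * w ^ 2 * p ^ 2) / Ee
      = X * (e * (1 + w * A) ^ 2 + e⁻¹ * w ^ 2 * p ^ 2) := by rw [hX]; ring
  have r2 : -(2 * κ) * M * Y * (e⁻¹ * w * p ^ 2 * (1 + w * A)) / Ee
      = -(2 * κ) * M * X * (e⁻¹ * w * p ^ 2 * (1 + w * A)) := by rw [hX]; ring
  rw [r1, r2]
  clear hX r1 r2
  have ha : (F11 + F33 + 1 / p * (P1 * F1 + P3 * F3) + e ^ 2 / (2 * p ^ 2) * (A1 ^ 2 + A3 ^ 2)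
      = κ / 2 * M * (X * (e * (1 + w * A) ^ 2 + e⁻¹ * w ^ 2 * p ^ 2) + 2 * P)) := by
    have := congrArg (fun t => t * (p / (2 * e))) a
    field_simp at this ⊢
    linear_combination -this
  have hb : A11 + A33 - 1 / p * (P1 * A1 + P3 * A3) + 4 * (F1 * A1 + F3 * A3)
      = -(2 * κ) * M * X * (e⁻¹ * w * p ^ 2 * (1 + w * A)) := by
    have := congrArg₂ (fun s t => (s + A * t) * (p / e)) b a
    field_simp at this ⊢
    apply mul_left_cancel₀ p0
    linear_combination this
  refine ⟨ha, hb, ?_⟩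
  have := congrArg₂ (fun x y => x + y)
    (congrArg₂ (fun s t => e * s + 2 * (-e * A) * t) g b)
    (congrArg (fun t => (-e * A ^ 2 + e⁻¹ * p ^ 2) * t) a)
  field_simp at this
  apply mul_left_cancel₀ (show 2 * p ^ 3 * e ≠ 0 by positivity)
  linear_combination -this

/-- **(36a)(36b)(36c) ⟹ (N.9a)(N.9b)(N.9c).** -/
theorem stmt_0
    (c κ : ℝ) (hc : 0 < c) (hκ : 0 < κ)
    (O : Set (ℝ × ℝ)) (hO : IsOpen O) (hOw : ∀ p ∈ O, 0 < p.1)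
    (F A Pt K ρ P Ω : ℝ × ℝ → ℝ)
    (hF : ContDiffOn ℝ 2 F O) (hA : ContDiffOn ℝ 2 A O)
    (hPt : ContDiffOn ℝ 2 Pt O) (hK : ContDiffOn ℝ 2 K O)
    (hPtpos : ∀ p ∈ O, 0 < Pt p)
    (hρc : ContinuousOn ρ O) (hPc : ContinuousOn P O) (hΩc : ContinuousOn Ω O)
    (hρ0 : ∀ p ∈ O, 0 ≤ ρ p) (hP0 : ∀ p ∈ O, 0 ≤ P p)
    (ε f k m l E Sg : ℝ × ℝ → ℝ)
    (hε : ε = fun p => c ^ 2 * ρ p)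
    (hf : f = fun p => exp (2 * F p))
    (hk : k = fun p => -exp (2 * F p) * A p)
    (hm : m = fun p => 2 * (-F p + K p))
    (hl : l = fun p => -exp (2 * F p) * (A p) ^ 2 + exp (-(2 * F p)) * (Pt p) ^ 2)
    (hE : E = fun p => exp (2 * F p) * (1 + Ω p * A p / c) ^ 2
      - exp (-(2 * F p)) * (Ω p ^ 2 / c ^ 2) * (Pt p) ^ 2)
    (hEpos : ∀ p ∈ O, 0 < E p)
    (hSg : Sg = fun p => d1 f p * d1 l p + d3 f p * d3 l p + (d1 k p) ^ 2 + (d3 k p) ^ 2)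
    (R00 R02 R22 : ℝ × ℝ → ℝ)
    (hR00 : ∀ p ∈ O, (2 * exp (m p) / Pt p) * R00 p =
      d1 (fun q => d1 f q / Pt q) p + d3 (fun q => d3 f q / Pt q) p + f p * Sg p / (Pt p) ^ 3)
    (hR02 : ∀ p ∈ O, -((2 * exp (m p) / Pt p) * R02 p) =
      d1 (fun q => d1 k q / Pt q) p + d3 (fun q => d3 k q / Pt q) p + k p * Sg p / (Pt p) ^ 3)
    (hR22 : ∀ p ∈ O, -((2 * exp (m p) / Pt p) * R22 p) =
      d1 (fun q => d1 l q / Pt q) p + d3 (fun q => d3 l q / Pt q) p + l p * Sg p / (Pt p) ^ 3)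
    (S00 S02 S22 : ℝ × ℝ → ℝ)
    (hS00 : S00 = fun p => (1/2) * (ε p + P p) * (E p)⁻¹
      * ((f p - (Ω p / c) * k p) ^ 2 + (Ω p ^ 2 / c ^ 2) * (Pt p) ^ 2) + P p * f p)
    (hS02 : S02 = fun p => (1/2) * (ε p + P p) * (E p)⁻¹
      * (-(k p * f p) - 2 * (Ω p / c) * f p * l p + (Ω p ^ 2 / c ^ 2) * k p * l p) - P p * k p)
    (hS22 : S22 = fun p => (1/2) * (ε p + P p) * (E p)⁻¹
      * ((Pt p) ^ 2 + (k p + (Ω p / c) * l p) ^ 2) - P p * l p)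
    (h36a : ∀ p ∈ O, R00 p = κ * S00 p)
    (h36b : ∀ p ∈ O, R02 p = κ * S02 p)
    (h36c : ∀ p ∈ O, R22 p = κ * S22 p) :
    (∀ p ∈ O,
      d1 (d1 F) p + d3 (d3 F) p
        + (1 / Pt p) * (d1 Pt p * d1 F p + d3 Pt p * d3 F p)
        + (exp (4 * F p) / (2 * (Pt p) ^ 2)) * ((d1 A p) ^ 2 + (d3 A p) ^ 2)
      = (κ / 2) * exp (2 * (-F p + K p)) *
          ((ε p + P p) * (exp (2 * F p) * (1 + Ω p * A p / c) ^ 2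
            + exp (-(2 * F p)) * (Ω p ^ 2 / c ^ 2) * (Pt p) ^ 2) / E p + 2 * P p)) ∧
    (∀ p ∈ O,
      d1 (d1 A) p + d3 (d3 A) p
        - (1 / Pt p) * (d1 Pt p * d1 A p + d3 Pt p * d3 A p)
        + 4 * (d1 F p * d1 A p + d3 F p * d3 A p)
      = -(2 * κ) * exp (2 * (-F p + K p)) * (ε p + P p) *
          (exp (-(2 * F p)) * (Ω p / c) * (Pt p) ^ 2 * (1 + Ω p * A p / c)) / E p) ∧
    (∀ p ∈ O,
      d1 (d1 Pt) p + d3 (d3 Pt) p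
      = 2 * κ * exp (2 * (-F p + K p)) * P p * Pt p) := by
  have key : ∀ p ∈ O,
      (d1 (d1 F) p + d3 (d3 F) p + 1 / Pt p * (d1 Pt p * d1 F p + d3 Pt p * d3 F p)
        + exp (2 * F p) ^ 2 / (2 * Pt p ^ 2) * (d1 A p ^ 2 + d3 A p ^ 2)
      = κ / 2 * exp (2 * (-F p + K p)) * ((ε p + P p) * (exp (2 * F p) * (1 + Ω p / c * A p) ^ 2
        + (exp (2 * F p))⁻¹ * (Ω p / c) ^ 2 * Pt p ^ 2) / E p + 2 * P p)) ∧
      (d1 (d1 A) p + d3 (d3 A) p - 1 / Pt p * (d1 Pt p * d1 A p + d3 Pt p * d3 A p)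
        + 4 * (d1 F p * d1 A p + d3 F p * d3 A p)
      = -(2 * κ) * exp (2 * (-F p + K p)) * (ε p + P p)
        * ((exp (2 * F p))⁻¹ * (Ω p / c) * Pt p ^ 2 * (1 + Ω p / c * A p)) / E p) ∧
      (d1 (d1 Pt) p + d3 (d3 Pt) p = 2 * κ * exp (2 * (-F p + K p)) * P p * Pt p) := by
    intro p hp
    obtain ⟨f1, k1, l1, f2, k2, l2⟩ := expand hO hF hA hPt hPtpos hf hk hl (1, 0) (d := d1)
      (fun _ => rfl) p hp _ _ rfl rfl
    obtain ⟨f3, k3, l3, f4, k4, l4⟩ := expand hO hF hA hPt hPtpos hf hk hl (0, 1) (d := d3)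
      (fun _ => rfl) p hp _ _ rfl rfl
    have a := hR00 p hp
    have b := hR02 p hp
    have g := hR22 p hp
    have hSp : Sg p = d1 f p * d1 l p + d3 f p * d3 l p + (d1 k p) ^ 2 + (d3 k p) ^ 2 := by
      rw [hSg]
    rw [h36a p hp, f2, f4, hS00] at a
    rw [h36b p hp, k2, k4, hS02] at b
    rw [h36c p hp, l2, l4, hS22] at g
    rw [f1, k1, l1, f3, k3, l3] at hSp
    have hfp : f p = exp (2 * F p) := by rw [hf]
    have hkp : k p = -exp (2 * F p) * A p := by rw [hk]
    have hlp : l p = -exp (2 * F p) * (A p) ^ 2 + exp (-(2 * F p)) * (Pt p) ^ 2 := by rw [hl]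
    have hmp : m p = 2 * (-F p + K p) := by rw [hm]
    have hJ : exp (-(2 * F p)) = (exp (2 * F p))⁻¹ := Real.exp_neg _
    have hw2 : Ω p ^ 2 / c ^ 2 = (Ω p / c) ^ 2 := by ring
    simp only [hfp, hkp, hlp, hmp, hJ, hw2] at a b g hSp
    refine alg (Ee := E p) (Y := ε p + P p) (w := Ω p / c) (exp_pos (2 * F p)) (hPtpos p hp) rfl hSp
      ?_ ?_ ?_
    · linear_combination a
    · linear_combination b
    · linear_combination g
  have h4 : ∀ p, exp (4 * F p) = exp (2 * F p) ^ 2 := by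
    intro p
    rw [← Real.exp_nat_mul]; congr 1; push_cast; ring
  have hJ : ∀ p, exp (-(2 * F p)) = (exp (2 * F p))⁻¹ := fun p => Real.exp_neg _
  have hw : ∀ p, Ω p * A p / c = Ω p / c * A p := by intro p; ring
  have hw2 : ∀ p, Ω p ^ 2 / c ^ 2 = (Ω p / c) ^ 2 := by intro p; ring
  refine ⟨fun p hp => ?_, fun p hp => ?_, fun p hp => ?_⟩
  · rw [h4, hJ, hw, hw2]; exact (key p hp).1
  · rw [hJ, hw]; exact (key p hp).2.1
  · exact (key p hp).2.2
end

section
/- Under the Setup, if equations (N.9a), (N.9b), (N.9c) hold on O, then equations (36a), (36b), (36c) hold on O. -/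
open Real

/-- Directional derivative. -/
noncomputable def Dv (v : ℝ × ℝ) (f : ℝ × ℝ → ℝ) : ℝ × ℝ → ℝ := fun p => fderiv ℝ f p v

theorem Dv_line {v p : ℝ × ℝ} {g : ℝ × ℝ → ℝ} (hg : DifferentiableAt ℝ g p) :
    HasDerivAt (fun t : ℝ => g (p + t • v)) (Dv v g p) 0 :=
  hg.hasFDerivAt.hasLineDerivAt v

theorem Dv_eq {v p : ℝ × ℝ} {g : ℝ × ℝ → ℝ} {a : ℝ} (hg : DifferentiableAt ℝ g p)
    (h : HasDerivAt (fun t : ℝ => g (p + t • v)) a 0) : Dv v g p = a :=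
  (Dv_line hg).unique h

theorem Dv_congr {v p : ℝ × ℝ} {g h : ℝ × ℝ → ℝ} {O : Set (ℝ × ℝ)} (hO : IsOpen O) (hp : p ∈ O)
    (H : ∀ q ∈ O, g q = h q) : Dv v g p = Dv v h p := by
  have : g =ᶠ[nhds p] h := Filter.eventually_of_mem (hO.mem_nhds hp) H
  simp only [Dv, this.fderiv_eq]

theorem Dv_diff {v p : ℝ × ℝ} {g : ℝ × ℝ → ℝ} {O : Set (ℝ × ℝ)} (hO : IsOpen O) (hp : p ∈ O)
    (hg : ContDiffOn ℝ 2 g O) : DifferentiableAt ℝ (Dv v g) p := by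
  have h1 : ContDiffAt ℝ 2 g p := hg.contDiffAt (hO.mem_nhds hp)
  have h2 : ContDiffAt ℝ 1 (fderiv ℝ g) p := h1.fderiv_right (by norm_num)
  exact (h2.differentiableAt (by norm_num)).clm_apply (differentiableAt_const v)

theorem diff_at {p : ℝ × ℝ} {g : ℝ × ℝ → ℝ} {O : Set (ℝ × ℝ)} (hO : IsOpen O) (hp : p ∈ O)
    (hg : ContDiffOn ℝ 2 g O) : DifferentiableAt ℝ g p :=
  (hg.contDiffAt (hO.mem_nhds hp)).differentiableAt (by norm_num)

section calc_
variable {v : ℝ × ℝ} {O : Set (ℝ × ℝ)} {F A Pt : ℝ × ℝ → ℝ}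

theorem Df (hO : IsOpen O) (hF : ContDiffOn ℝ 2 F O) {p : ℝ × ℝ} (hp : p ∈ O) :
    Dv v (fun p => exp (2 * F p)) p = exp (2 * F p) * (2 * Dv v F p) := by
  have hFd := diff_at hO hp hF
  refine Dv_eq (by fun_prop) ?_
  refine HasDerivAt.congr_deriv (((Dv_line (v := v) hFd).const_mul 2).exp) ?_
  simp

theorem Dk (hO : IsOpen O) (hF : ContDiffOn ℝ 2 F O) (hA : ContDiffOn ℝ 2 A O)
    {p : ℝ × ℝ} (hp : p ∈ O) :
    Dv v (fun p => -exp (2 * F p) * A p) p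
      = -(exp (2 * F p) * (2 * Dv v F p * A p + Dv v A p)) := by
  have hFd := diff_at hO hp hF
  have hAd := diff_at hO hp hA
  refine Dv_eq (by fun_prop) ?_
  refine HasDerivAt.congr_deriv (((Dv_line (v := v) hFd).const_mul 2).exp.neg.mul (Dv_line (v := v) hAd)) ?_
  simp
  ring

theorem Dl (hO : IsOpen O) (hF : ContDiffOn ℝ 2 F O) (hA : ContDiffOn ℝ 2 A O)
    (hPt : ContDiffOn ℝ 2 Pt O) {p : ℝ × ℝ} (hp : p ∈ O) :
    Dv v (fun p => -exp (2 * F p) * (A p) ^ 2 + exp (-(2 * F p)) * (Pt p) ^ 2) p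
      = -(exp (2 * F p) * (2 * Dv v F p * A p ^ 2 + 2 * A p * Dv v A p))
        + exp (-(2 * F p)) * (2 * Pt p * Dv v Pt p - 2 * Dv v F p * Pt p ^ 2) := by
  have hFd := diff_at hO hp hF
  have hAd := diff_at hO hp hA
  have hPd := diff_at hO hp hPt
  refine Dv_eq (by fun_prop) ?_
  have h1 := ((Dv_line (v := v) hFd).const_mul 2)
  refine HasDerivAt.congr_deriv ((h1.exp.neg.mul ((Dv_line (v := v) hAd).pow 2)).add
    (h1.neg.exp.mul ((Dv_line (v := v) hPd).pow 2))) ?_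
  simp
  ring

theorem DDf (hO : IsOpen O) (hF : ContDiffOn ℝ 2 F O)
    (hPt : ContDiffOn ℝ 2 Pt O) (hpos : ∀ p ∈ O, 0 < Pt p) {p : ℝ × ℝ} (hp : p ∈ O) :
    Dv v (fun q => Dv v (fun p => exp (2 * F p)) q / Pt q) p
      = exp (2 * F p) * (4 * Dv v F p ^ 2 + 2 * Dv v (Dv v F) p) / Pt p
        - exp (2 * F p) * (2 * Dv v F p) * Dv v Pt p / Pt p ^ 2 := by
  rw [Dv_congr (h := fun q => exp (2 * F q) * (2 * Dv v F q) / Pt q) hO hp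
    (fun q hq => by simp only [Df hO hF hq])]
  have hFd := diff_at hO hp hF
  have hPd := diff_at hO hp hPt
  have hF2 := Dv_diff (v := v) hO hp hF
  have h0 := (hpos p hp).ne'
  refine Dv_eq (by fun_prop (disch := assumption)) ?_
  have h1 := ((Dv_line (v := v) hFd).const_mul 2)
  refine HasDerivAt.congr_deriv ((h1.exp.mul ((Dv_line (v := v) hF2).const_mul 2)).div (Dv_line (v := v) hPd)
    (by simpa using h0)) ?_
  simp
  field_simp
  ring

theorem DDk (hO : IsOpen O) (hF : ContDiffOn ℝ 2 F O) (hA : ContDiffOn ℝ 2 A O)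
    (hPt : ContDiffOn ℝ 2 Pt O) (hpos : ∀ p ∈ O, 0 < Pt p) {p : ℝ × ℝ} (hp : p ∈ O) :
    Dv v (fun q => Dv v (fun p => -exp (2 * F p) * A p) q / Pt q) p
      = -(exp (2 * F p) * (4 * Dv v F p ^ 2 * A p + 2 * Dv v (Dv v F) p * A p
          + 4 * Dv v F p * Dv v A p + Dv v (Dv v A) p)) / Pt p
        + exp (2 * F p) * (2 * Dv v F p * A p + Dv v A p) * Dv v Pt p / Pt p ^ 2 := by
  rw [Dv_congr (h := fun q => -(exp (2 * F q) * (2 * Dv v F q * A q + Dv v A q)) / Pt q) hO hp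
    (fun q hq => by simp only [Dk hO hF hA hq])]
  have hFd := diff_at hO hp hF
  have hAd := diff_at hO hp hA
  have hPd := diff_at hO hp hPt
  have hF2 := Dv_diff (v := v) hO hp hF
  have hA2 := Dv_diff (v := v) hO hp hA
  have h0 := (hpos p hp).ne'
  refine Dv_eq (by fun_prop (disch := assumption)) ?_
  have h1 := ((Dv_line (v := v) hFd).const_mul 2)
  refine HasDerivAt.congr_deriv ((h1.exp.mul ((((Dv_line (v := v) hF2).const_mul 2).mul (Dv_line (v := v) hAd)).add
    (Dv_line (v := v) hA2))).neg.div (Dv_line (v := v) hPd)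
    (by simpa using h0)) ?_
  simp
  field_simp
  ring

theorem DDl (hO : IsOpen O) (hF : ContDiffOn ℝ 2 F O) (hA : ContDiffOn ℝ 2 A O)
    (hPt : ContDiffOn ℝ 2 Pt O) (hpos : ∀ p ∈ O, 0 < Pt p) {p : ℝ × ℝ} (hp : p ∈ O) :
    Dv v (fun q => Dv v (fun p => -exp (2 * F p) * (A p) ^ 2
        + exp (-(2 * F p)) * (Pt p) ^ 2) q / Pt q) p
      = (-(exp (2 * F p) * (4 * Dv v F p ^ 2 * A p ^ 2 + 2 * Dv v (Dv v F) p * A p ^ 2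
          + 8 * Dv v F p * A p * Dv v A p + 2 * Dv v A p ^ 2 + 2 * A p * Dv v (Dv v A) p))
          + exp (-(2 * F p)) * (2 * Dv v Pt p ^ 2 + 2 * Pt p * Dv v (Dv v Pt) p
            - 8 * Dv v F p * Pt p * Dv v Pt p + 4 * Dv v F p ^ 2 * Pt p ^ 2
            - 2 * Dv v (Dv v F) p * Pt p ^ 2)) / Pt p
        - (-(exp (2 * F p) * (2 * Dv v F p * A p ^ 2 + 2 * A p * Dv v A p))
        + exp (-(2 * F p)) * (2 * Pt p * Dv v Pt p - 2 * Dv v F p * Pt p ^ 2))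
          * Dv v Pt p / Pt p ^ 2 := by
  rw [Dv_congr (h := fun q => (-(exp (2 * F q) * (2 * Dv v F q * A q ^ 2 + 2 * A q * Dv v A q))
        + exp (-(2 * F q)) * (2 * Pt q * Dv v Pt q - 2 * Dv v F q * Pt q ^ 2)) / Pt q) hO hp
    (fun q hq => by simp only [Dl hO hF hA hPt hq])]
  have hFd := diff_at hO hp hF
  have hAd := diff_at hO hp hA
  have hPd := diff_at hO hp hPt
  have hF2 := Dv_diff (v := v) hO hp hF
  have hA2 := Dv_diff (v := v) hO hp hA
  have hP2 := Dv_diff (v := v) hO hp hPt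
  have h0 := (hpos p hp).ne'
  refine Dv_eq (by fun_prop (disch := assumption)) ?_
  have h1 := ((Dv_line (v := v) hFd).const_mul 2)
  have f2 := ((Dv_line (v := v) hF2).const_mul 2)
  have a1 := (Dv_line (v := v) hAd)
  have p1 := (Dv_line (v := v) hPd)
  refine HasDerivAt.congr_deriv (((h1.exp.mul ((f2.mul (a1.pow 2)).add
    ((a1.const_mul 2).mul (Dv_line (v := v) hA2)))).neg.add
    (h1.neg.exp.mul (((p1.const_mul 2).mul (Dv_line (v := v) hP2)).sub
      (f2.mul (p1.pow 2))))).div p1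
    (by simpa using h0)) ?_
  simp
  field_simp
  ring

end calc_

theorem d1_Dv : d1 = Dv (1, 0) := rfl
theorem d3_Dv : d3 = Dv (0, 1) := rfl

theorem alg_s1 (c κ : ℝ) (hc : c ≠ 0)
    (M e E W ε Ω A P F1 F3 A1 A3 P1 P3 F11 F33 A11 A33 P11 P33 R0 R1 R2 : ℝ)
    (hM : M ≠ 0) (he : e ≠ 0) (hE0 : E ≠ 0) (hW : W ≠ 0)
    (hE : E = e * (1 + Ω * A / c) ^ 2 - e⁻¹ * (Ω ^ 2 / c ^ 2) * W ^ 2)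
    (a : F11 + F33 + (1 / W) * (P1 * F1 + P3 * F3) + (e ^ 2 / (2 * W ^ 2)) * (A1 ^ 2 + A3 ^ 2)
      = (κ / 2) * M * ((ε + P) * (e * (1 + Ω * A / c) ^ 2
        + e⁻¹ * (Ω ^ 2 / c ^ 2) * W ^ 2) / E + 2 * P))
    (b : A11 + A33 - (1 / W) * (P1 * A1 + P3 * A3) + 4 * (F1 * A1 + F3 * A3)
      = -(2 * κ) * M * (ε + P) * (e⁻¹ * (Ω / c) * W ^ 2 * (1 + Ω * A / c)) / E)
    (d : P11 + P33 = 2 * κ * M * P * W)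
    (f k l f1 k1 l1 f3 k3 l3 Sg : ℝ) (hf : f = e) (hk : k = -e * A)
    (hl : l = -e * A ^ 2 + e⁻¹ * W ^ 2)
    (hf1 : f1 = e * (2 * F1)) (hf3 : f3 = e * (2 * F3))
    (hk1 : k1 = -(e * (2 * F1 * A + A1))) (hk3 : k3 = -(e * (2 * F3 * A + A3)))
    (hl1 : l1 = -(e * (2 * F1 * A ^ 2 + 2 * A * A1)) + e⁻¹ * (2 * W * P1 - 2 * F1 * W ^ 2))
    (hl3 : l3 = -(e * (2 * F3 * A ^ 2 + 2 * A * A3)) + e⁻¹ * (2 * W * P3 - 2 * F3 * W ^ 2))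
    (hSg : Sg = f1 * l1 + f3 * l3 + k1 ^ 2 + k3 ^ 2)
    (r0 : (2 * M / W) * R0 = (e * (4 * F1 ^ 2 + 2 * F11) / W - f1 * P1 / W ^ 2)
      + (e * (4 * F3 ^ 2 + 2 * F33) / W - f3 * P3 / W ^ 2) + f * Sg / W ^ 3)
    (r1 : -((2 * M / W) * R1) =
      (-(e * (4 * F1 ^ 2 * A + 2 * F11 * A + 4 * F1 * A1 + A11)) / W
        + e * (2 * F1 * A + A1) * P1 / W ^ 2)
      + (-(e * (4 * F3 ^ 2 * A + 2 * F33 * A + 4 * F3 * A3 + A33)) / W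
        + e * (2 * F3 * A + A3) * P3 / W ^ 2) + k * Sg / W ^ 3)
    (r2 : -((2 * M / W) * R2) =
      ((-(e * (4 * F1 ^ 2 * A ^ 2 + 2 * F11 * A ^ 2 + 8 * F1 * A * A1 + 2 * A1 ^ 2 + 2 * A * A11))
          + e⁻¹ * (2 * P1 ^ 2 + 2 * W * P11 - 8 * F1 * W * P1 + 4 * F1 ^ 2 * W ^ 2
            - 2 * F11 * W ^ 2)) / W - l1 * P1 / W ^ 2)
      + ((-(e * (4 * F3 ^ 2 * A ^ 2 + 2 * F33 * A ^ 2 + 8 * F3 * A * A3 + 2 * A3 ^ 2 + 2 * A * A33))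
          + e⁻¹ * (2 * P3 ^ 2 + 2 * W * P33 - 8 * F3 * W * P3 + 4 * F3 ^ 2 * W ^ 2
            - 2 * F33 * W ^ 2)) / W - l3 * P3 / W ^ 2) + l * Sg / W ^ 3) :
    R0 = κ * ((1/2) * (ε + P) * E⁻¹ * ((f - (Ω / c) * k) ^ 2 + (Ω ^ 2 / c ^ 2) * W ^ 2) + P * f) ∧
    R1 = κ * ((1/2) * (ε + P) * E⁻¹
      * (-(k * f) - 2 * (Ω / c) * f * l + (Ω ^ 2 / c ^ 2) * k * l) - P * k) ∧
    R2 = κ * ((1/2) * (ε + P) * E⁻¹ * (W ^ 2 + (k + (Ω / c) * l) ^ 2) - P * l) := by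
  subst hf1 hf3 hk1 hk3 hl1 hl3 hSg hf hk hl
  have hF : F33 = _ := eq_sub_of_add_eq' (eq_sub_of_add_eq (eq_sub_of_add_eq a))
  have hA : A33 = _ := eq_sub_of_add_eq' (eq_add_of_sub_eq (eq_sub_of_add_eq b))
  have hP : P33 = _ := eq_sub_of_add_eq' d
  have hX : (2 * M / W) ≠ 0 := by positivity
  -- set x = Ω/c, w = (ε+P)/E
  obtain ⟨x, hx⟩ : ∃ x, x = Ω / c := ⟨_, rfl⟩
  obtain ⟨w, hw⟩ : ∃ w, w = (ε + P) * E⁻¹ := ⟨_, rfl⟩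
  have hΩ : Ω = x * c := by rw [hx]; field_simp
  have hε : ε = w * E - P := by rw [hw]; field_simp; ring
  subst hΩ hε
  clear hx hw
  refine ⟨?_, ?_, ?_⟩
  · apply mul_left_cancel₀ hX
    rw [r0, hF]
    clear r0 r1 r2 hF hA hP a b d
    field_simp
    ring
  · apply mul_left_cancel₀ hX
    rw [← neg_inj, r1, hF, hA]
    clear r0 r1 r2 hF hA hP a b d
    field_simp
    ring
  · apply mul_left_cancel₀ hX
    rw [← neg_inj, r2, hF, hA, hP]
    clear r0 r1 r2 hF hA hP a b d
    field_simp
    ring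

/-- **(N.9a)(N.9b)(N.9c) ⟹ (36a)(36b)(36c)** (Proposition 2 of the paper). -/
theorem stmt_1
    (c κ : ℝ) (hc : 0 < c) (hκ : 0 < κ)
    (O : Set (ℝ × ℝ)) (hO : IsOpen O) (hOw : ∀ p ∈ O, 0 < p.1)
    (F A Pt K ρ P Ω : ℝ × ℝ → ℝ)
    (hF : ContDiffOn ℝ 2 F O) (hA : ContDiffOn ℝ 2 A O)
    (hPt : ContDiffOn ℝ 2 Pt O) (hK : ContDiffOn ℝ 2 K O)
    (hPtpos : ∀ p ∈ O, 0 < Pt p)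
    (hρc : ContinuousOn ρ O) (hPc : ContinuousOn P O) (hΩc : ContinuousOn Ω O)
    (hρ0 : ∀ p ∈ O, 0 ≤ ρ p) (hP0 : ∀ p ∈ O, 0 ≤ P p)
    (ε f k m l E Sg : ℝ × ℝ → ℝ)
    (hε : ε = fun p => c ^ 2 * ρ p)
    (hf : f = fun p => exp (2 * F p))
    (hk : k = fun p => -exp (2 * F p) * A p)
    (hm : m = fun p => 2 * (-F p + K p))
    (hl : l = fun p => -exp (2 * F p) * (A p) ^ 2 + exp (-(2 * F p)) * (Pt p) ^ 2)
    (hE : E = fun p => exp (2 * F p) * (1 + Ω p * A p / c) ^ 2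
      - exp (-(2 * F p)) * (Ω p ^ 2 / c ^ 2) * (Pt p) ^ 2)
    (hEpos : ∀ p ∈ O, 0 < E p)
    (hSg : Sg = fun p => d1 f p * d1 l p + d3 f p * d3 l p + (d1 k p) ^ 2 + (d3 k p) ^ 2)
    (R00 R02 R22 : ℝ × ℝ → ℝ)
    (hR00 : ∀ p ∈ O, (2 * exp (m p) / Pt p) * R00 p =
      d1 (fun q => d1 f q / Pt q) p + d3 (fun q => d3 f q / Pt q) p + f p * Sg p / (Pt p) ^ 3)
    (hR02 : ∀ p ∈ O, -((2 * exp (m p) / Pt p) * R02 p) =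
      d1 (fun q => d1 k q / Pt q) p + d3 (fun q => d3 k q / Pt q) p + k p * Sg p / (Pt p) ^ 3)
    (hR22 : ∀ p ∈ O, -((2 * exp (m p) / Pt p) * R22 p) =
      d1 (fun q => d1 l q / Pt q) p + d3 (fun q => d3 l q / Pt q) p + l p * Sg p / (Pt p) ^ 3)
    (S00 S02 S22 : ℝ × ℝ → ℝ)
    (hS00 : S00 = fun p => (1/2) * (ε p + P p) * (E p)⁻¹
      * ((f p - (Ω p / c) * k p) ^ 2 + (Ω p ^ 2 / c ^ 2) * (Pt p) ^ 2) + P p * f p)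
    (hS02 : S02 = fun p => (1/2) * (ε p + P p) * (E p)⁻¹
      * (-(k p * f p) - 2 * (Ω p / c) * f p * l p + (Ω p ^ 2 / c ^ 2) * k p * l p) - P p * k p)
    (hS22 : S22 = fun p => (1/2) * (ε p + P p) * (E p)⁻¹
      * ((Pt p) ^ 2 + (k p + (Ω p / c) * l p) ^ 2) - P p * l p)
    (hN9a : (∀ p ∈ O,
      d1 (d1 F) p + d3 (d3 F) p
        + (1 / Pt p) * (d1 Pt p * d1 F p + d3 Pt p * d3 F p)
        + (exp (4 * F p) / (2 * (Pt p) ^ 2)) * ((d1 A p) ^ 2 + (d3 A p) ^ 2)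
      = (κ / 2) * exp (2 * (-F p + K p)) *
          ((ε p + P p) * (exp (2 * F p) * (1 + Ω p * A p / c) ^ 2
            + exp (-(2 * F p)) * (Ω p ^ 2 / c ^ 2) * (Pt p) ^ 2) / E p + 2 * P p)))
    (hN9b : (∀ p ∈ O,
      d1 (d1 A) p + d3 (d3 A) p
        - (1 / Pt p) * (d1 Pt p * d1 A p + d3 Pt p * d3 A p)
        + 4 * (d1 F p * d1 A p + d3 F p * d3 A p)
      = -(2 * κ) * exp (2 * (-F p + K p)) * (ε p + P p) *
          (exp (-(2 * F p)) * (Ω p / c) * (Pt p) ^ 2 * (1 + Ω p * A p / c)) / E p))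
    (hN9c : (∀ p ∈ O,
      d1 (d1 Pt) p + d3 (d3 Pt) p
      = 2 * κ * exp (2 * (-F p + K p)) * P p * Pt p)) :
    (∀ p ∈ O, R00 p = κ * S00 p) ∧
    (∀ p ∈ O, R02 p = κ * S02 p) ∧
    (∀ p ∈ O, R22 p = κ * S22 p) := by
  subst hε hf hk hm hl hSg hS00 hS02 hS22
  rw [← forall₂_and, ← forall₂_and]
  intro p hp
  beta_reduce
  have a := hN9a p hp
  have b := hN9b p hp
  have d := hN9c p hp
  have r0 := hR00 p hp
  have r1 := hR02 p hp
  have r2 := hR22 p hp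
  have hEp := hEpos p hp
  have hE' : E p = _ := congrFun hE p
  have hPp := hPtpos p hp
  simp only [d1_Dv, d3_Dv, DDf hO hF hPt hPtpos hp, DDk hO hF hA hPt hPtpos hp,
    DDl hO hF hA hPt hPtpos hp, Df hO hF hp, Dk hO hF hA hp, Dl hO hF hA hPt hp] at a b d r0 r1 r2
  have e4 : exp (4 * F p) = exp (2 * F p) ^ 2 := by
    rw [← exp_nat_mul]; congr 1; push_cast; ring
  have en : exp (-(2 * F p)) = (exp (2 * F p))⁻¹ := exp_neg _
  rw [e4] at a
  rw [en] at a b r0 r1 r2 hE'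
  have hM := exp_pos (2 * (-F p + K p))
  have he := exp_pos (2 * F p)
  rw [en]
  exact alg_s1 c κ hc.ne' _ _ _ _ _ _ _ _ _ _ _ _ _ _ _ _ _ _ _ _ _ _ _ hM.ne' he.ne' hEp.ne' hPp.ne'
    hE' a b d _ _ _ _ _ _ _ _ _ _ rfl rfl rfl rfl rfl rfl rfl rfl rfl rfl
    (r0.trans (by ring)) (r1.trans (by ring)) (r2.trans (by ring))
end

section
/- Under the Setup, if equations (36d), (36e), (36f) hold on O, then equations (Ya) and (Yb) hold on O. -/
open Real

/-- Derivatives of `f, k, l, m` in a direction `v`, in terms of those of `F, A, Π, K`. -/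
theorem aux_deriv (F A Pt K : ℝ × ℝ → ℝ) (p v : ℝ × ℝ)
    (hF : DifferentiableAt ℝ F p) (hA : DifferentiableAt ℝ A p)
    (hPt : DifferentiableAt ℝ Pt p) (hK : DifferentiableAt ℝ K p) :
    fderiv ℝ (fun p => exp (2 * F p)) p v = 2 * exp (2 * F p) * fderiv ℝ F p v ∧
    fderiv ℝ (fun p => -exp (2 * F p) * A p) p v =
      -(2 * exp (2 * F p) * fderiv ℝ F p v * A p) - exp (2 * F p) * fderiv ℝ A p v ∧
    fderiv ℝ (fun p => 2 * (-F p + K p)) p v = 2 * (-fderiv ℝ F p v + fderiv ℝ K p v) ∧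
    fderiv ℝ (fun p => -exp (2 * F p) * (A p) ^ 2 + exp (-(2 * F p)) * (Pt p) ^ 2) p v =
      -(2 * exp (2 * F p) * fderiv ℝ F p v * A p ^ 2)
        - 2 * exp (2 * F p) * A p * fderiv ℝ A p v
        - 2 * exp (-(2 * F p)) * fderiv ℝ F p v * Pt p ^ 2
        + 2 * exp (-(2 * F p)) * Pt p * fderiv ℝ Pt p v := by
  have h1 := (hF.hasFDerivAt.const_mul 2).exp
  have h2 := (hF.hasFDerivAt.const_mul 2).neg.exp
  have a := hA.hasFDerivAt
  have q := hPt.hasFDerivAt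
  have hk := h1.neg.mul a
  have hm := (hF.hasFDerivAt.neg.add hK.hasFDerivAt).const_mul 2
  have hl := (h1.neg.mul (a.pow 2)).add (h2.mul (q.pow 2))
  refine ⟨?_, ?_, ?_, ?_⟩
  · refine (congrArg (fun L => L v) h1.fderiv).trans ?_
    simp; ring
  · refine (congrArg (fun L => L v) hk.fderiv).trans ?_
    simp; ring
  · refine (congrArg (fun L => L v) hm.fderiv).trans ?_
    simp; ring
  · refine (congrArg (fun L => L v) hl.fderiv).trans ?_
    simp; ring

/-- **(36d)(36e)(36f) ⟹ (Ya)(Yb).** -/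
theorem stmt_2
    (c κ : ℝ) (hc : 0 < c) (hκ : 0 < κ)
    (O : Set (ℝ × ℝ)) (hO : IsOpen O) (hOw : ∀ p ∈ O, 0 < p.1)
    (F A Pt K ρ P Ω : ℝ × ℝ → ℝ)
    (hF : ContDiffOn ℝ 2 F O) (hA : ContDiffOn ℝ 2 A O)
    (hPt : ContDiffOn ℝ 2 Pt O) (hK : ContDiffOn ℝ 2 K O)
    (hPtpos : ∀ p ∈ O, 0 < Pt p)
    (hρc : ContinuousOn ρ O) (hPc : ContinuousOn P O) (hΩc : ContinuousOn Ω O)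
    (hρ0 : ∀ p ∈ O, 0 ≤ ρ p) (hP0 : ∀ p ∈ O, 0 ≤ P p)
    (ε f k m l E Sg : ℝ × ℝ → ℝ)
    (hε : ε = fun p => c ^ 2 * ρ p)
    (hf : f = fun p => exp (2 * F p))
    (hk : k = fun p => -exp (2 * F p) * A p)
    (hm : m = fun p => 2 * (-F p + K p))
    (hl : l = fun p => -exp (2 * F p) * (A p) ^ 2 + exp (-(2 * F p)) * (Pt p) ^ 2)
    (hE : E = fun p => exp (2 * F p) * (1 + Ω p * A p / c) ^ 2
      - exp (-(2 * F p)) * (Ω p ^ 2 / c ^ 2) * (Pt p) ^ 2)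
    (hEpos : ∀ p ∈ O, 0 < E p)
    (hSg : Sg = fun p => d1 f p * d1 l p + d3 f p * d3 l p + (d1 k p) ^ 2 + (d3 k p) ^ 2)
    (R11 R33 R13 : ℝ × ℝ → ℝ)
    (hR11 : ∀ p ∈ O, 2 * R11 p =
      -(d1 (d1 m) p) - d3 (d3 m) p - 2 * d1 (d1 Pt) p / Pt p
        + (1 / Pt p) * (d1 m p * d1 Pt p - d3 m p * d3 Pt p)
        + (1 / (Pt p) ^ 2) * (d1 f p * d1 l p + (d1 k p) ^ 2))
    (hR33 : ∀ p ∈ O, 2 * R33 p =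
      -(d1 (d1 m) p) - d3 (d3 m) p - 2 * d3 (d3 Pt) p / Pt p
        - (1 / Pt p) * (d1 m p * d1 Pt p - d3 m p * d3 Pt p)
        + (1 / (Pt p) ^ 2) * (d3 f p * d3 l p + (d3 k p) ^ 2))
    (hR13 : ∀ p ∈ O, 2 * R13 p =
      -(2 * d1 (d3 Pt) p / Pt p)
        + (1 / Pt p) * (d3 m p * d1 Pt p + d1 m p * d3 Pt p)
        + (1 / (2 * (Pt p) ^ 2)) * (d1 f p * d3 l p + d1 l p * d3 f p + 2 * d1 k p * d3 k p))
    (S11 : ℝ × ℝ → ℝ)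
    (hS11 : S11 = fun p => (exp (m p) / 2) * (ε p - P p))
    (h36d : ∀ p ∈ O, R11 p = κ * S11 p)
    (h36e : ∀ p ∈ O, R33 p = κ * S11 p)
    (h36f : ∀ p ∈ O, R13 p = 0) :
    (∀ p ∈ O,
      d1 Pt p * d1 K p - d3 Pt p * d3 K p
      = (1/2) * (d1 (d1 Pt) p - d3 (d3 Pt) p)
        + Pt p * ((d1 F p) ^ 2 - (d3 F p) ^ 2)
        - (exp (4 * F p) / (4 * Pt p)) * ((d1 A p) ^ 2 - (d3 A p) ^ 2)) ∧
    (∀ p ∈ O,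
      d3 Pt p * d1 K p + d1 Pt p * d3 K p
      = d1 (d3 Pt) p + 2 * Pt p * d1 F p * d3 F p
        - (exp (4 * F p) / (2 * Pt p)) * (d1 A p * d3 A p)) := by
  have key : ∀ p ∈ O, DifferentiableAt ℝ F p ∧ DifferentiableAt ℝ A p ∧
      DifferentiableAt ℝ Pt p ∧ DifferentiableAt ℝ K p := fun p hp =>
    ⟨(hF.contDiffAt (hO.mem_nhds hp)).differentiableAt (by norm_num),
     (hA.contDiffAt (hO.mem_nhds hp)).differentiableAt (by norm_num),
     (hPt.contDiffAt (hO.mem_nhds hp)).differentiableAt (by norm_num),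
     (hK.contDiffAt (hO.mem_nhds hp)).differentiableAt (by norm_num)⟩
  have e4 : ∀ p, exp (4 * F p) = exp (2 * F p) ^ 2 := fun p => by
    rw [← exp_nat_mul]; congr 1; push_cast; ring
  have en : ∀ p, exp (2 * F p) * exp (-(2 * F p)) = 1 := fun p => by
    rw [← exp_add]; simp
  have main : ∀ p ∈ O, ∃ g : ℝ, g * exp (2 * F p) = 1 ∧
      d1 f p = 2 * exp (2 * F p) * d1 F p ∧ d3 f p = 2 * exp (2 * F p) * d3 F p ∧
      d1 k p = -(2 * exp (2 * F p) * d1 F p * A p) - exp (2 * F p) * d1 A p ∧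
      d3 k p = -(2 * exp (2 * F p) * d3 F p * A p) - exp (2 * F p) * d3 A p ∧
      d1 m p = 2 * (-d1 F p + d1 K p) ∧ d3 m p = 2 * (-d3 F p + d3 K p) ∧
      d1 l p = -(2 * exp (2 * F p) * d1 F p * A p ^ 2) - 2 * exp (2 * F p) * A p * d1 A p
        - 2 * g * d1 F p * Pt p ^ 2 + 2 * g * Pt p * d1 Pt p ∧
      d3 l p = -(2 * exp (2 * F p) * d3 F p * A p ^ 2) - 2 * exp (2 * F p) * A p * d3 A p
        - 2 * g * d3 F p * Pt p ^ 2 + 2 * g * Pt p * d3 Pt p := by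
    intro p hp
    obtain ⟨a, b, c, d⟩ := key p hp
    obtain ⟨x1, x2, x3, x4⟩ := aux_deriv F A Pt K p (1, 0) a b c d
    obtain ⟨y1, y2, y3, y4⟩ := aux_deriv F A Pt K p (0, 1) a b c d
    subst hf hk hm hl
    exact ⟨exp (-(2 * F p)), by rw [mul_comm]; exact en p, x1, y1, x2, y2, x3, y3, x4, y4⟩
  constructor
  · intro p hp
    have hq := (hPtpos p hp).ne'
    have h := (hR11 p hp).symm.trans ((by rw [h36d p hp, h36e p hp] :
      2 * R11 p = 2 * R33 p).trans (hR33 p hp))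
    obtain ⟨g, hg, f1, f3, k1, k3, m1, m3, l1, l3⟩ := main p hp
    have i1 : d1 f p * d1 l p + d1 k p ^ 2 = -4 * d1 F p ^ 2 * Pt p ^ 2
        + 4 * d1 F p * Pt p * d1 Pt p + exp (2 * F p) ^ 2 * d1 A p ^ 2 := by
      rw [f1, l1, k1]
      linear_combination (-4 * d1 F p ^ 2 * Pt p ^ 2 + 4 * d1 F p * Pt p * d1 Pt p) * hg
    have i3 : d3 f p * d3 l p + d3 k p ^ 2 = -4 * d3 F p ^ 2 * Pt p ^ 2
        + 4 * d3 F p * Pt p * d3 Pt p + exp (2 * F p) ^ 2 * d3 A p ^ 2 := by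
      rw [f3, l3, k3]
      linear_combination (-4 * d3 F p ^ 2 * Pt p ^ 2 + 4 * d3 F p * Pt p * d3 Pt p) * hg
    rw [i1, i3, m1, m3] at h
    rw [e4]
    generalize exp (2 * F p) = x at *
    generalize d1 (d1 m) p = m11 at *
    generalize d3 (d3 m) p = m33 at *
    have h' := congrArg (fun t => (t + m11 + m33) * Pt p ^ 2) h
    clear h
    field_simp at h' ⊢
    linear_combination 2 * h'
  · intro p hp
    have hq := (hPtpos p hp).ne'
    have h := hR13 p hp
    rw [h36f p hp] at h
    obtain ⟨g, hg, f1, f3, k1, k3, m1, m3, l1, l3⟩ := main p hp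
    have i1 : d1 f p * d3 l p + d1 l p * d3 f p + 2 * d1 k p * d3 k p =
        -8 * d1 F p * d3 F p * Pt p ^ 2
        + 4 * Pt p * (d1 F p * d3 Pt p + d3 F p * d1 Pt p)
        + 2 * exp (2 * F p) ^ 2 * d1 A p * d3 A p := by
      rw [f1, l1, k1, f3, l3, k3]
      linear_combination (-8 * d1 F p * d3 F p * Pt p ^ 2
        + 4 * Pt p * (d1 F p * d3 Pt p + d3 F p * d1 Pt p)) * hg
    rw [i1, m1, m3] at h
    rw [e4]
    generalize exp (2 * F p) = x at *
    field_simp at h ⊢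
    linear_combination (-1 / 2 : ℝ) * h
end

section
/- Under the Setup, suppose additionally: Π is C³ and K is C² on O; (C): (∂₁Π)² + (∂₃Π)² ≠ 0 everywhere on O; O = O₁ ∪ O₂ where O₁, O₂ are open, Ω is constant on O₁, and ρ = P = 0 on O₂; P is C¹ on O₁; and on O₁ the Euler relation ∂ⱼP = (ε+P)·(1/(2E))·(−∂ⱼf + 2(Ω/c)∂ⱼk + (Ω²/c²)∂ⱼl) holds for j = 1,3. If equations (N.9a), (N.9b), (N.9c), (Ya), (Yb) hold on O, then equations (36d), (36e), (36f) hold on O. -/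
open Real

lemma aux_hd {g : ℝ × ℝ → ℝ} {p : ℝ × ℝ} (h : DifferentiableAt ℝ g p) (v : ℝ × ℝ) :
    HasDerivAt (fun t : ℝ => g (p + t • v)) (fderiv ℝ g p v) 0 :=
  h.hasFDerivAt.hasLineDerivAt v

lemma aux_d_eq {g : ℝ × ℝ → ℝ} {p : ℝ × ℝ} (h : DifferentiableAt ℝ g p) (v : ℝ × ℝ) {x : ℝ}
    (hx : HasDerivAt (fun t : ℝ => g (p + t • v)) x 0) : fderiv ℝ g p v = x :=
  (aux_hd h v).unique hx

lemma aux_line {p v : ℝ × ℝ} {O : Set (ℝ × ℝ)} (hO : IsOpen O) (hp : p ∈ O) :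
    ∀ᶠ t : ℝ in nhds 0, p + t • v ∈ O := by
  have hc : ContinuousAt (fun t : ℝ => p + t • v) 0 := by fun_prop
  apply hc.eventually_mem
  simpa using hO.mem_nhds hp

lemma aux_cd {g : ℝ × ℝ → ℝ} {O : Set (ℝ × ℝ)} (hO : IsOpen O) (v : ℝ × ℝ)
    {a b : WithTop ℕ∞} (hab : a + 1 ≤ b)
    (h : ContDiffOn ℝ b g O) : ContDiffOn ℝ a (fun q => fderiv ℝ g q v) O :=
  (h.fderiv_of_isOpen hO hab).clm_apply contDiffOn_const

lemma aux_symm {g : ℝ × ℝ → ℝ} {O : Set (ℝ × ℝ)} (hO : IsOpen O) {p : ℝ × ℝ} (hp : p ∈ O)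
    (h : ContDiffOn ℝ 2 g O) : d3 (d1 g) p = d1 (d3 g) p := by
  have hat : ContDiffAt ℝ 2 g p := h.contDiffAt (hO.mem_nhds hp)
  have hs := hat.isSymmSndFDerivAt (by simp)
  have hd : DifferentiableAt ℝ (fderiv ℝ g) p :=
    ((h.fderiv_of_isOpen (m := 1) hO (by norm_num)).differentiableOn (by norm_num)).differentiableAt
      (hO.mem_nhds hp)
  have e : ∀ v w : ℝ × ℝ, fderiv ℝ (fun q => fderiv ℝ g q v) p w = fderiv ℝ (fderiv ℝ g) p w v := by
    intro v w
    rw [fderiv_clm_apply hd (by fun_prop)]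
    simp
  show fderiv ℝ (fun q => fderiv ℝ g q (1, 0)) p (0, 1) =
    fderiv ℝ (fun q => fderiv ℝ g q (0, 1)) p (1, 0)
  rw [e, e]
  exact hs _ _

lemma aux_congr {g h : ℝ × ℝ → ℝ} {O : Set (ℝ × ℝ)} (hO : IsOpen O) {p : ℝ × ℝ} (hp : p ∈ O)
    (e : ∀ q ∈ O, g q = h q) (v : ℝ × ℝ) : fderiv ℝ g p v = fderiv ℝ h p v := by
  have : g =ᶠ[nhds p] h := by
    filter_upwards [hO.mem_nhds hp] with q hq using e q hq
  rw [this.fderiv_eq]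

lemma aux_W {f b : ℝ → ℝ} {f' b' : ℝ} (hf : HasDerivAt f f' 0) (hb : HasDerivAt b b' 0)
    (h0 : b 0 ≠ 0) :
    HasDerivAt (fun t => exp (4 * f t) / b t)
      (exp (4 * f 0) / b 0 * (4 * f' - b' / b 0)) 0 := by
  refine ((hf.const_mul 4).exp.div hb h0).congr_deriv ?_
  field_simp

lemma aux_A {b b1 b3 k1 k3 q r f f1 f3 a1 a3 : ℝ → ℝ}
    {b' b1' b3' k1' k3' q' r' f' f1' f3' a1' a3' : ℝ}
    (hb : HasDerivAt b b' 0) (hb1 : HasDerivAt b1 b1' 0) (hb3 : HasDerivAt b3 b3' 0)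
    (hk1 : HasDerivAt k1 k1' 0) (hk3 : HasDerivAt k3 k3' 0) (hq : HasDerivAt q q' 0)
    (hr : HasDerivAt r r' 0)
    (hf : HasDerivAt f f' 0) (hf1 : HasDerivAt f1 f1' 0) (hf3 : HasDerivAt f3 f3' 0)
    (ha1 : HasDerivAt a1 a1' 0) (ha3 : HasDerivAt a3 a3' 0) (h0 : b 0 ≠ 0)
    (heq : ∀ᶠ t in nhds (0 : ℝ), b1 t * k1 t - b3 t * k3 t
      = (1/2) * (q t - r t) + b t * ((f1 t) ^ 2 - (f3 t) ^ 2)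
        - (exp (4 * f t) / (4 * b t)) * ((a1 t) ^ 2 - (a3 t) ^ 2)) :
    b1' * k1 0 + b1 0 * k1' - b3' * k3 0 - b3 0 * k3'
      = (1/2) * (q' - r') + b' * ((f1 0) ^ 2 - (f3 0) ^ 2)
        + b 0 * (2 * f1 0 * f1' - 2 * f3 0 * f3')
        - (exp (4 * f 0) / b 0) * (4 * f' - b' / b 0) / 4 * ((a1 0) ^ 2 - (a3 0) ^ 2)
        - (exp (4 * f 0) / b 0) / 4 * (2 * a1 0 * a1' - 2 * a3 0 * a3') := by
  have hL := (hb1.mul hk1).sub (hb3.mul hk3)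
  have hR := (((hq.sub hr).const_mul (1/2)).add (hb.mul ((hf1.pow 2).sub (hf3.pow 2)))).sub
    (((aux_W hf hb h0).div_const 4).mul ((ha1.pow 2).sub (ha3.pow 2)))
  have := hL.unique (hR.congr_of_eventuallyEq (by
    filter_upwards [heq] with t ht
    simp only [Pi.add_apply, Pi.sub_apply, Pi.mul_apply, Pi.pow_apply]
    rw [ht, div_div, mul_comm (4 : ℝ) (b t)]))
  simp only [Pi.add_apply, Pi.sub_apply, Pi.mul_apply, Pi.pow_apply] at this
  linear_combination (norm := (push_cast; ring)) this

lemma aux_B {b b1 b3 k1 k3 q f f1 f3 a1 a3 : ℝ → ℝ}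
    {b' b1' b3' k1' k3' q' f' f1' f3' a1' a3' : ℝ}
    (hb : HasDerivAt b b' 0) (hb1 : HasDerivAt b1 b1' 0) (hb3 : HasDerivAt b3 b3' 0)
    (hk1 : HasDerivAt k1 k1' 0) (hk3 : HasDerivAt k3 k3' 0) (hq : HasDerivAt q q' 0)
    (hf : HasDerivAt f f' 0) (hf1 : HasDerivAt f1 f1' 0) (hf3 : HasDerivAt f3 f3' 0)
    (ha1 : HasDerivAt a1 a1' 0) (ha3 : HasDerivAt a3 a3' 0) (h0 : b 0 ≠ 0)
    (heq : ∀ᶠ t in nhds (0 : ℝ), b3 t * k1 t + b1 t * k3 t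
      = q t + 2 * b t * f1 t * f3 t - (exp (4 * f t) / (2 * b t)) * (a1 t * a3 t)) :
    b3' * k1 0 + b3 0 * k1' + b1' * k3 0 + b1 0 * k3'
      = q' + 2 * b' * f1 0 * f3 0 + 2 * b 0 * (f1' * f3 0 + f1 0 * f3')
        - (exp (4 * f 0) / b 0) * (4 * f' - b' / b 0) / 2 * (a1 0 * a3 0)
        - (exp (4 * f 0) / b 0) / 2 * (a1' * a3 0 + a1 0 * a3') := by
  have hL := (hb3.mul hk1).add (hb1.mul hk3)
  have hR := (hq.add (((hb.const_mul 2).mul hf1).mul hf3)).sub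
    (((aux_W hf hb h0).div_const 2).mul (ha1.mul ha3))
  have := hL.unique (hR.congr_of_eventuallyEq (by
    filter_upwards [heq] with t ht
    simp only [Pi.add_apply, Pi.sub_apply, Pi.mul_apply]
    rw [ht, div_div, mul_comm (2 : ℝ) (b t)]))
  simp only [Pi.add_apply, Pi.sub_apply, Pi.mul_apply] at this
  linear_combination (norm := (push_cast; ring)) this

lemma aux_C {b f k P q r : ℝ → ℝ} {b' f' k' P' q' r' : ℝ} (κ : ℝ)
    (hb : HasDerivAt b b' 0) (hf : HasDerivAt f f' 0) (hk : HasDerivAt k k' 0)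
    (hP : HasDerivAt P P' 0) (hq : HasDerivAt q q' 0) (hr : HasDerivAt r r' 0)
    (heq : ∀ᶠ t in nhds (0 : ℝ), q t + r t = 2 * κ * exp (2 * (-f t + k t)) * P t * b t) :
    q' + r' = 2 * κ * exp (2 * (-f 0 + k 0)) *
      (2 * (-f' + k') * P 0 * b 0 + P' * b 0 + P 0 * b') := by
  have hL := hq.add hr
  have hR := (((((hf.neg.add hk).const_mul 2).exp.const_mul (2 * κ)).mul hP).mul hb)
  have := hL.unique (hR.congr_of_eventuallyEq (by
    filter_upwards [heq] with t ht
    simp only [Pi.add_apply, Pi.mul_apply, Pi.neg_apply]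
    rw [ht]))
  simp only [Pi.add_apply, Pi.mul_apply, Pi.neg_apply] at this
  linear_combination this

lemma aux_f {f : ℝ → ℝ} {f' : ℝ} (hf : HasDerivAt f f' 0) :
    HasDerivAt (fun t => exp (2 * f t)) (2 * exp (2 * f 0) * f') 0 := by
  convert (hf.const_mul 2).exp using 1
  ring

lemma aux_k {f a : ℝ → ℝ} {f' a' : ℝ} (hf : HasDerivAt f f' 0) (ha : HasDerivAt a a' 0) :
    HasDerivAt (fun t => -exp (2 * f t) * a t)
      (-(2 * exp (2 * f 0) * f') * a 0 - exp (2 * f 0) * a') 0 := by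
  refine ((aux_f hf).neg.mul ha).congr_deriv ?_
  simp only [Pi.neg_apply]
  ring

lemma aux_l {f a b : ℝ → ℝ} {f' a' b' : ℝ} (hf : HasDerivAt f f' 0) (ha : HasDerivAt a a' 0)
    (hb : HasDerivAt b b' 0) :
    HasDerivAt (fun t => -exp (2 * f t) * (a t) ^ 2 + exp (-(2 * f t)) * (b t) ^ 2)
      (-(2 * exp (2 * f 0) * f') * a 0 ^ 2 - 2 * exp (2 * f 0) * a 0 * a'
        - 2 * f' * (exp (2 * f 0))⁻¹ * b 0 ^ 2 + 2 * (exp (2 * f 0))⁻¹ * b 0 * b') 0 := by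
  refine (((aux_f hf).neg.mul (ha.pow 2)).add
    ((hf.const_mul 2).neg.exp.mul (hb.pow 2))).congr_deriv ?_
  simp only [Pi.neg_apply, Pi.pow_apply, Real.exp_neg]
  push_cast
  ring

/-- The algebra behind the equation for the Laplacian of `K`. -/
lemma aux_alg {κ M Q P ε u w a b F1 F3 A1 A3 b1 b3 K1 P1 LF LA LK LP q E : ℝ}
    (hu : u ≠ 0) (hb : b ≠ 0)
    (hE : E = u * (1 + w * a) ^ 2 - u⁻¹ * w ^ 2 * b ^ 2)
    (hQ : Q * E = ε + P)
    (hP1 : P1 = Q / 2 * (-(2 * u * F1) + 2 * w * (-(2 * u * F1) * a - u * A1)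
      + w ^ 2 * (-(2 * u * F1) * a ^ 2 - 2 * u * a * A1 - 2 * F1 * u⁻¹ * b ^ 2
        + 2 * u⁻¹ * b * b1)))
    (hFa : LF + (1 / b) * (b1 * F1 + b3 * F3) + (u ^ 2 / (2 * b ^ 2)) * (A1 ^ 2 + A3 ^ 2)
      = (κ / 2) * M * (Q * (u * (1 + w * a) ^ 2 + u⁻¹ * w ^ 2 * b ^ 2) + 2 * P))
    (hAb : LA - (1 / b) * (b1 * A1 + b3 * A3) + 4 * (F1 * A1 + F3 * A3)
      = -(2 * κ) * M * Q * (u⁻¹ * w * b ^ 2 * (1 + w * a)))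
    (hc : LP = 2 * κ * M * P * b)
    (hq : q = 2 * κ * M * (2 * (-F1 + K1) * P * b + P1 * b + P * b1))
    (hsum : LP * K1 + b1 * LK = q / 2 + b1 * (F1 ^ 2 - F3 ^ 2) + 2 * b3 * F1 * F3
      + 2 * b * F1 * LF
      - u ^ 2 / b * (4 * F1 - b1 / b) / 4 * (A1 ^ 2 - A3 ^ 2)
      - u ^ 2 / b * (4 * F3 - b3 / b) / 2 * (A1 * A3)
      - u ^ 2 / b / 2 * A1 * LA) :
    b1 * (-2 * LK + 2 * LF - LP / b
      + (1 / (2 * b ^ 2)) * (-4 * b ^ 2 * (F1 ^ 2 + F3 ^ 2) + 4 * b * (F1 * b1 + F3 * b3)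
        + u ^ 2 * (A1 ^ 2 + A3 ^ 2)) - κ * M * (ε - P)) = 0 := by
  have hε : ε = Q * E - P := by linarith
  have hLF := eq_sub_of_add_eq (eq_sub_of_add_eq hFa)
  have hLA : LA = -(2 * κ) * M * Q * (u⁻¹ * w * b ^ 2 * (1 + w * a)) - 4 * (F1 * A1 + F3 * A3)
    + (1 / b) * (b1 * A1 + b3 * A3) := by linarith
  have hLK := eq_sub_of_add_eq' hsum
  rw [show ∀ X Y Z W : ℝ, b1 * (-2 * LK + X - Y + Z - W) = -2 * (b1 * LK) + b1 * (X - Y + Z - W)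
    from fun X Y Z W => by ring, hLK]
  subst hc hq hP1 hε hLF hLA hE
  field_simp
  ring

/-- **Proposition 4 of the paper.** Under (C), with `O = O₁ ∪ O₂`, `Ω` constant on `O₁`,
vacuum on `O₂`, `Pt` of class `C³`, `P` of class `C¹` on `O₁` and the Euler relation on `O₁`:
the reduced equations (N.9a)(N.9b)(N.9c)(Ya)(Yb) imply (36d)(36e)(36f). -/
theorem stmt_3
    (c κ : ℝ) (hc : 0 < c) (hκ : 0 < κ)
    (O : Set (ℝ × ℝ)) (hO : IsOpen O) (hOw : ∀ p ∈ O, 0 < p.1)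
    (F A Pt K ρ P Ω : ℝ × ℝ → ℝ)
    (hF : ContDiffOn ℝ 2 F O) (hA : ContDiffOn ℝ 2 A O)
    (hPt : ContDiffOn ℝ 3 Pt O) (hK : ContDiffOn ℝ 2 K O)
    (hPtpos : ∀ p ∈ O, 0 < Pt p)
    (hρc : ContinuousOn ρ O) (hPc : ContinuousOn P O) (hΩc : ContinuousOn Ω O)
    (hρ0 : ∀ p ∈ O, 0 ≤ ρ p) (hP0 : ∀ p ∈ O, 0 ≤ P p)
    (ε f k m l E Sg : ℝ × ℝ → ℝ)
    (hε : ε = fun p => c ^ 2 * ρ p)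
    (hf : f = fun p => exp (2 * F p))
    (hk : k = fun p => -exp (2 * F p) * A p)
    (hm : m = fun p => 2 * (-F p + K p))
    (hl : l = fun p => -exp (2 * F p) * (A p) ^ 2 + exp (-(2 * F p)) * (Pt p) ^ 2)
    (hE : E = fun p => exp (2 * F p) * (1 + Ω p * A p / c) ^ 2
      - exp (-(2 * F p)) * (Ω p ^ 2 / c ^ 2) * (Pt p) ^ 2)
    (hEpos : ∀ p ∈ O, 0 < E p)
    (hSg : Sg = fun p => d1 f p * d1 l p + d3 f p * d3 l p + (d1 k p) ^ 2 + (d3 k p) ^ 2)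
    (hC : ∀ p ∈ O, (d1 Pt p) ^ 2 + (d3 Pt p) ^ 2 ≠ 0)
    (O₁ O₂ : Set (ℝ × ℝ)) (hO₁ : IsOpen O₁) (hO₂ : IsOpen O₂) (hO12 : O = O₁ ∪ O₂)
    (hΩconst : ∃ Ωc : ℝ, ∀ p ∈ O₁, Ω p = Ωc)
    (hvac : ∀ p ∈ O₂, ρ p = 0 ∧ P p = 0)
    (hPC1 : ContDiffOn ℝ 1 P O₁)
    (hEuler1 : ∀ p ∈ O₁, d1 P p = (ε p + P p) * (1 / (2 * E p))
      * (-(d1 f p) + 2 * (Ω p / c) * d1 k p + (Ω p ^ 2 / c ^ 2) * d1 l p))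
    (hEuler3 : ∀ p ∈ O₁, d3 P p = (ε p + P p) * (1 / (2 * E p))
      * (-(d3 f p) + 2 * (Ω p / c) * d3 k p + (Ω p ^ 2 / c ^ 2) * d3 l p))
    (R11 R33 R13 : ℝ × ℝ → ℝ)
    (hR11 : ∀ p ∈ O, 2 * R11 p =
      -(d1 (d1 m) p) - d3 (d3 m) p - 2 * d1 (d1 Pt) p / Pt p
        + (1 / Pt p) * (d1 m p * d1 Pt p - d3 m p * d3 Pt p)
        + (1 / (Pt p) ^ 2) * (d1 f p * d1 l p + (d1 k p) ^ 2))
    (hR33 : ∀ p ∈ O, 2 * R33 p =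
      -(d1 (d1 m) p) - d3 (d3 m) p - 2 * d3 (d3 Pt) p / Pt p
        - (1 / Pt p) * (d1 m p * d1 Pt p - d3 m p * d3 Pt p)
        + (1 / (Pt p) ^ 2) * (d3 f p * d3 l p + (d3 k p) ^ 2))
    (hR13 : ∀ p ∈ O, 2 * R13 p =
      -(2 * d1 (d3 Pt) p / Pt p)
        + (1 / Pt p) * (d3 m p * d1 Pt p + d1 m p * d3 Pt p)
        + (1 / (2 * (Pt p) ^ 2)) * (d1 f p * d3 l p + d1 l p * d3 f p + 2 * d1 k p * d3 k p))
    (S11 : ℝ × ℝ → ℝ)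
    (hS11 : S11 = fun p => (exp (m p) / 2) * (ε p - P p))
    (hN9a : ∀ p ∈ O,
      d1 (d1 F) p + d3 (d3 F) p
        + (1 / Pt p) * (d1 Pt p * d1 F p + d3 Pt p * d3 F p)
        + (exp (4 * F p) / (2 * (Pt p) ^ 2)) * ((d1 A p) ^ 2 + (d3 A p) ^ 2)
      = (κ / 2) * exp (2 * (-F p + K p)) *
          ((ε p + P p) * (exp (2 * F p) * (1 + Ω p * A p / c) ^ 2
            + exp (-(2 * F p)) * (Ω p ^ 2 / c ^ 2) * (Pt p) ^ 2) / E p + 2 * P p))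
    (hN9b : ∀ p ∈ O,
      d1 (d1 A) p + d3 (d3 A) p
        - (1 / Pt p) * (d1 Pt p * d1 A p + d3 Pt p * d3 A p)
        + 4 * (d1 F p * d1 A p + d3 F p * d3 A p)
      = -(2 * κ) * exp (2 * (-F p + K p)) * (ε p + P p) *
          (exp (-(2 * F p)) * (Ω p / c) * (Pt p) ^ 2 * (1 + Ω p * A p / c)) / E p)
    (hN9c : ∀ p ∈ O,
      d1 (d1 Pt) p + d3 (d3 Pt) p
      = 2 * κ * exp (2 * (-F p + K p)) * P p * Pt p)
    (hYa : ∀ p ∈ O,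
      d1 Pt p * d1 K p - d3 Pt p * d3 K p
      = (1/2) * (d1 (d1 Pt) p - d3 (d3 Pt) p)
        + Pt p * ((d1 F p) ^ 2 - (d3 F p) ^ 2)
        - (exp (4 * F p) / (4 * Pt p)) * ((d1 A p) ^ 2 - (d3 A p) ^ 2))
    (hYb : ∀ p ∈ O,
      d3 Pt p * d1 K p + d1 Pt p * d3 K p
      = d1 (d3 Pt) p + 2 * Pt p * d1 F p * d3 F p
        - (exp (4 * F p) / (2 * Pt p)) * (d1 A p * d3 A p)) :
    (∀ p ∈ O, R11 p = κ * S11 p) ∧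
    (∀ p ∈ O, R33 p = κ * S11 p) ∧
    (∀ p ∈ O, R13 p = 0) := by
  
  have hP2 : ContDiffOn ℝ 2 Pt O := hPt.of_le (by norm_num)
  have dif : ∀ {g : ℝ × ℝ → ℝ} {n : WithTop ℕ∞}, ContDiffOn ℝ n g O → n ≠ 0 → ∀ {p}, p ∈ O →
      DifferentiableAt ℝ g p := fun hg hn p hp =>
    (hg.differentiableOn hn).differentiableAt (hO.mem_nhds hp)
  have c1 : ∀ {g : ℝ × ℝ → ℝ}, ContDiffOn ℝ 2 g O → ContDiffOn ℝ 1 (d1 g) O :=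
    fun hg => aux_cd hO (1, 0) (by norm_num) hg
  have c3 : ∀ {g : ℝ × ℝ → ℝ}, ContDiffOn ℝ 2 g O → ContDiffOn ℝ 1 (d3 g) O :=
    fun hg => aux_cd hO (0, 1) (by norm_num) hg
  have hPt1 : ContDiffOn ℝ 2 (d1 Pt) O := aux_cd hO (1, 0) (by norm_num) hPt
  have hPt3 : ContDiffOn ℝ 2 (d3 Pt) O := aux_cd hO (0, 1) (by norm_num) hPt
  have two : (2 : WithTop ℕ∞) ≠ 0 := by norm_num
  have one : (1 : WithTop ℕ∞) ≠ 0 := by norm_num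
  -- P is differentiable and the Euler relation holds everywhere
  have hPd : ∀ p ∈ O, DifferentiableAt ℝ P p ∧
      (d1 P p = (ε p + P p) * (1 / (2 * E p))
      * (-(d1 f p) + 2 * (Ω p / c) * d1 k p + (Ω p ^ 2 / c ^ 2) * d1 l p)) ∧
      (d3 P p = (ε p + P p) * (1 / (2 * E p))
      * (-(d3 f p) + 2 * (Ω p / c) * d3 k p + (Ω p ^ 2 / c ^ 2) * d3 l p)) := by
    intro p hp
    rw [hO12] at hp
    rcases hp with hp | hp
    · exact ⟨(hPC1.differentiableOn one).differentiableAt (hO₁.mem_nhds hp),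
        hEuler1 p hp, hEuler3 p hp⟩
    · have e : P =ᶠ[nhds p] fun _ => (0 : ℝ) := by
        filter_upwards [hO₂.mem_nhds hp] with q hq using (hvac q hq).2
      refine ⟨e.symm.differentiableAt_iff.1 (differentiableAt_const _), ?_, ?_⟩
      · simp [d1, e.fderiv_eq, hε, (hvac p hp).1, (hvac p hp).2]
      · simp [d3, e.fderiv_eq, hε, (hvac p hp).1, (hvac p hp).2]
  -- first derivatives of f, k, l, m
  have Df : ∀ p ∈ O, ∀ v, fderiv ℝ f p v = 2 * exp (2 * F p) * fderiv ℝ F p v := by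
    intro p hp v
    have dF := dif hF two hp
    have := aux_f (aux_hd dF v)
    simp only [zero_smul, add_zero] at this
    exact aux_d_eq (by rw [hf]; fun_prop) v (by rw [hf]; exact this)
  have Dk : ∀ p ∈ O, ∀ v, fderiv ℝ k p v = -(2 * exp (2 * F p) * fderiv ℝ F p v) * A p
      - exp (2 * F p) * fderiv ℝ A p v := by
    intro p hp v
    have dF := dif hF two hp
    have dA := dif hA two hp
    have := aux_k (aux_hd dF v) (aux_hd dA v)
    simp only [zero_smul, add_zero] at this
    exact aux_d_eq (by rw [hk]; fun_prop) v (by rw [hk]; exact this)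
  have Dl : ∀ p ∈ O, ∀ v, fderiv ℝ l p v = -(2 * exp (2 * F p) * fderiv ℝ F p v) * A p ^ 2
      - 2 * exp (2 * F p) * A p * fderiv ℝ A p v
      - 2 * fderiv ℝ F p v * (exp (2 * F p))⁻¹ * Pt p ^ 2
      + 2 * (exp (2 * F p))⁻¹ * Pt p * fderiv ℝ Pt p v := by
    intro p hp v
    have dF := dif hF two hp
    have dA := dif hA two hp
    have dPt := dif hP2 two hp
    have := aux_l (aux_hd dF v) (aux_hd dA v) (aux_hd dPt v)
    simp only [zero_smul, add_zero] at this
    exact aux_d_eq (by rw [hl]; fun_prop) v (by rw [hl]; exact this)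
  have Dm0 : ∀ G H : ℝ × ℝ → ℝ, ∀ p, DifferentiableAt ℝ G p → DifferentiableAt ℝ H p → ∀ v,
      fderiv ℝ (fun q => 2 * (-G q + H q)) p v = 2 * (-fderiv ℝ G p v + fderiv ℝ H p v) := by
    intro G H p hG hH v
    exact aux_d_eq (by fun_prop) v (((aux_hd hG v).neg.add (aux_hd hH v)).const_mul 2)
  have Dm : ∀ p ∈ O, ∀ v, fderiv ℝ m p v = 2 * (-fderiv ℝ F p v + fderiv ℝ K p v) := by
    intro p hp v
    rw [hm]
    exact Dm0 F K p (dif hF two hp) (dif hK two hp) v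
  have Dm11 : ∀ p ∈ O, d1 (d1 m) p = 2 * (-d1 (d1 F) p + d1 (d1 K) p) := by
    intro p hp
    have := aux_congr hO hp (fun q hq => Dm q hq (1, 0)) (1, 0)
    exact this.trans (Dm0 (d1 F) (d1 K) p (dif (c1 hF) one hp) (dif (c1 hK) one hp) (1, 0))
  have Dm33 : ∀ p ∈ O, d3 (d3 m) p = 2 * (-d3 (d3 F) p + d3 (d3 K) p) := by
    intro p hp
    have := aux_congr hO hp (fun q hq => Dm q hq (0, 1)) (0, 1)
    exact this.trans (Dm0 (d3 F) (d3 K) p (dif (c3 hF) one hp) (dif (c3 hK) one hp) (0, 1))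
  have Df1 := fun p hp => Df p hp (1, 0)
  have Df3 := fun p hp => Df p hp (0, 1)
  have Dk1 := fun p hp => Dk p hp (1, 0)
  have Dk3 := fun p hp => Dk p hp (0, 1)
  have Dl1 := fun p hp => Dl p hp (1, 0)
  have Dl3 := fun p hp => Dl p hp (0, 1)
  have Dm1 := fun p hp => Dm p hp (1, 0)
  have Dm3 := fun p hp => Dm p hp (0, 1)
  change ∀ p ∈ O, d1 f p = 2 * exp (2 * F p) * d1 F p at Df1
  change ∀ p ∈ O, d3 f p = 2 * exp (2 * F p) * d3 F p at Df3
  change ∀ p ∈ O, d1 k p = -(2 * exp (2 * F p) * d1 F p) * A p - exp (2 * F p) * d1 A p at Dk1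
  change ∀ p ∈ O, d3 k p = -(2 * exp (2 * F p) * d3 F p) * A p - exp (2 * F p) * d3 A p at Dk3
  change ∀ p ∈ O, d1 l p = -(2 * exp (2 * F p) * d1 F p) * A p ^ 2
      - 2 * exp (2 * F p) * A p * d1 A p - 2 * d1 F p * (exp (2 * F p))⁻¹ * Pt p ^ 2
      + 2 * (exp (2 * F p))⁻¹ * Pt p * d1 Pt p at Dl1
  change ∀ p ∈ O, d3 l p = -(2 * exp (2 * F p) * d3 F p) * A p ^ 2
      - 2 * exp (2 * F p) * A p * d3 A p - 2 * d3 F p * (exp (2 * F p))⁻¹ * Pt p ^ 2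
      + 2 * (exp (2 * F p))⁻¹ * Pt p * d3 Pt p at Dl3
  change ∀ p ∈ O, d1 m p = 2 * (-d1 F p + d1 K p) at Dm1
  change ∀ p ∈ O, d3 m p = 2 * (-d3 F p + d3 K p) at Dm3
  have h4 : ∀ p, exp (4 * F p) = exp (2 * F p) ^ 2 := by
    intro p
    rw [← Real.exp_nat_mul]
    congr 1
    push_cast
    ring
  -- the equation for the Laplacian of K
  have main : ∀ p ∈ O, -2 * (d1 (d1 K) p + d3 (d3 K) p) + 2 * (d1 (d1 F) p + d3 (d3 F) p)
      - (d1 (d1 Pt) p + d3 (d3 Pt) p) / Pt p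
      + (1 / (2 * Pt p ^ 2)) * (-4 * Pt p ^ 2 * (d1 F p ^ 2 + d3 F p ^ 2)
        + 4 * Pt p * (d1 F p * d1 Pt p + d3 F p * d3 Pt p)
        + exp (2 * F p) ^ 2 * (d1 A p ^ 2 + d3 A p ^ 2))
      - κ * exp (2 * (-F p + K p)) * (ε p - P p) = 0 := by
    intro p hp
    obtain ⟨dP, eu1, eu3⟩ := hPd p hp
    have hb0 : Pt p ≠ 0 := (hPtpos p hp).ne'
    have hu0 : exp (2 * F p) ≠ 0 := (exp_pos _).ne'
    have hE0 : E p ≠ 0 := (hEpos p hp).ne'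
    have sF := aux_symm hO hp hF
    have sA := aux_symm hO hp hA
    have sK := aux_symm hO hp hK
    have sPt := aux_symm hO hp hP2
    have s1 : d3 (d1 (d3 Pt)) p = d1 (d3 (d3 Pt)) p := aux_symm hO hp hPt3
    have s2 : d1 (d1 (d3 Pt)) p = d3 (d1 (d1 Pt)) p := by
      rw [aux_symm hO hp hPt1]
      exact (aux_congr hO hp (fun q hq => aux_symm hO hq hP2) (1, 0)).symm
    have LA := fun v => aux_A (aux_hd (dif hP2 two hp) v) (aux_hd (dif hPt1 two hp) v)
      (aux_hd (dif hPt3 two hp) v) (aux_hd (dif (c1 hK) one hp) v) (aux_hd (dif (c3 hK) one hp) v)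
      (aux_hd (dif (c1 hPt1) one hp) v) (aux_hd (dif (c3 hPt3) one hp) v)
      (aux_hd (dif hF two hp) v) (aux_hd (dif (c1 hF) one hp) v) (aux_hd (dif (c3 hF) one hp) v)
      (aux_hd (dif (c1 hA) one hp) v) (aux_hd (dif (c3 hA) one hp) v) (by simpa using hb0)
      ((aux_line hO hp).mono (fun t ht => hYa _ ht))
    have LB := fun v => aux_B (aux_hd (dif hP2 two hp) v) (aux_hd (dif hPt1 two hp) v)
      (aux_hd (dif hPt3 two hp) v) (aux_hd (dif (c1 hK) one hp) v) (aux_hd (dif (c3 hK) one hp) v)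
      (aux_hd (dif (c1 hPt3) one hp) v)
      (aux_hd (dif hF two hp) v) (aux_hd (dif (c1 hF) one hp) v) (aux_hd (dif (c3 hF) one hp) v)
      (aux_hd (dif (c1 hA) one hp) v) (aux_hd (dif (c3 hA) one hp) v) (by simpa using hb0)
      ((aux_line hO hp).mono (fun t ht => hYb _ ht))
    have LC := fun v => aux_C κ (aux_hd (dif hP2 two hp) v) (aux_hd (dif hF two hp) v)
      (aux_hd (dif hK two hp) v) (aux_hd dP v)
      (aux_hd (dif (c1 hPt1) one hp) v) (aux_hd (dif (c3 hPt3) one hp) v)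
      ((aux_line hO hp).mono (fun t ht => hN9c _ ht))
    simp only [zero_smul, add_zero, h4] at LA LB LC
    have D1 : ∀ g q, fderiv ℝ g q (1, 0) = d1 g q := fun _ _ => rfl
    have D3 : ∀ g q, fderiv ℝ g q (0, 1) = d3 g q := fun _ _ => rfl
    have A1 := LA (1, 0)
    have A3 := LA (0, 1)
    have B1 := LB (1, 0)
    have B3 := LB (0, 1)
    have C1 := LC (1, 0)
    have C3 := LC (0, 1)
    simp only [D1, D3, sF, sA, sK, sPt, s1, s2] at A1 A3 B1 B3 C1 C3
    have hEp : E p = exp (2 * F p) * (1 + Ω p / c * A p) ^ 2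
        - (exp (2 * F p))⁻¹ * (Ω p / c) ^ 2 * Pt p ^ 2 := by
      rw [hE]
      simp only [Real.exp_neg]
      ring
    have hQ : (ε p + P p) / E p * E p = ε p + P p := div_mul_cancel₀ _ hE0
    have Na := hN9a p hp
    have Nb := hN9b p hp
    have Nc := hN9c p hp
    rw [h4, Real.exp_neg] at Na
    rw [Real.exp_neg] at Nb
    rw [Df1 p hp, Dk1 p hp, Dl1 p hp] at eu1
    rw [Df3 p hp, Dk3 p hp, Dl3 p hp] at eu3
    have r1 := aux_alg (κ := κ) (M := exp (2 * (-F p + K p))) (Q := (ε p + P p) / E p)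
      (P := P p) (ε := ε p) (u := exp (2 * F p)) (w := Ω p / c) (a := A p) (b := Pt p)
      (F1 := d1 F p) (F3 := d3 F p) (A1 := d1 A p) (A3 := d3 A p) (b1 := d1 Pt p) (b3 := d3 Pt p)
      (K1 := d1 K p) (P1 := d1 P p) (LF := d1 (d1 F) p + d3 (d3 F) p)
      (LA := d1 (d1 A) p + d3 (d3 A) p) (LK := d1 (d1 K) p + d3 (d3 K) p)
      (LP := d1 (d1 Pt) p + d3 (d3 Pt) p) (q := d1 (d1 (d1 Pt)) p + d1 (d3 (d3 Pt)) p) (E := E p)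
      hu0 hb0 hEp hQ (by rw [eu1]; ring) (by rw [Na]; ring) (by rw [Nb]; ring) Nc C1
      (by linear_combination A1 + B3)
    have r3 := aux_alg (κ := κ) (M := exp (2 * (-F p + K p))) (Q := (ε p + P p) / E p)
      (P := P p) (ε := ε p) (u := exp (2 * F p)) (w := Ω p / c) (a := A p) (b := Pt p)
      (F1 := d3 F p) (F3 := d1 F p) (A1 := d3 A p) (A3 := d1 A p) (b1 := d3 Pt p) (b3 := d1 Pt p)
      (K1 := d3 K p) (P1 := d3 P p) (LF := d1 (d1 F) p + d3 (d3 F) p)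
      (LA := d1 (d1 A) p + d3 (d3 A) p) (LK := d1 (d1 K) p + d3 (d3 K) p)
      (LP := d1 (d1 Pt) p + d3 (d3 Pt) p) (q := d3 (d1 (d1 Pt)) p + d3 (d3 (d3 Pt)) p) (E := E p)
      hu0 hb0 hEp hQ (by rw [eu3]; ring) (by linear_combination Na) (by linear_combination Nb) Nc C3
      (by linear_combination B1 - A3)
    refine (mul_eq_zero.1 ?_).resolve_left (hC p hp)
    linear_combination d1 Pt p * r1 + d3 Pt p * r3
  have hS : ∀ p, S11 p = exp (2 * (-F p + K p)) / 2 * (ε p - P p) := by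
    intro p
    rw [hS11, hm]
  refine ⟨fun p hp => ?_, fun p hp => ?_, fun p hp => ?_⟩
  · have hb0 : Pt p ≠ 0 := (hPtpos p hp).ne'
    have hu0 : exp (2 * F p) ≠ 0 := (exp_pos _).ne'
    have h := hR11 p hp
    have M := main p hp
    have Y := hYa p hp
    rw [h4] at Y
    rw [Dm11 p hp, Dm33 p hp, Dm1 p hp, Dm3 p hp, Df1 p hp, Dk1 p hp, Dl1 p hp] at h
    rw [hS]
    linear_combination (norm := (field_simp; ring)) h / 2 + M / 2 + Y / Pt p
  · have hb0 : Pt p ≠ 0 := (hPtpos p hp).ne'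
    have hu0 : exp (2 * F p) ≠ 0 := (exp_pos _).ne'
    have h := hR33 p hp
    have M := main p hp
    have Y := hYa p hp
    rw [h4] at Y
    rw [Dm11 p hp, Dm33 p hp, Dm1 p hp, Dm3 p hp, Df3 p hp, Dk3 p hp, Dl3 p hp] at h
    rw [hS]
    linear_combination (norm := (field_simp; ring)) h / 2 + M / 2 - Y / Pt p
  · have hb0 : Pt p ≠ 0 := (hPtpos p hp).ne'
    have hu0 : exp (2 * F p) ≠ 0 := (exp_pos _).ne'
    have h := hR13 p hp
    have Y := hYb p hp
    rw [h4] at Y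
    rw [Dm1 p hp, Dm3 p hp, Df1 p hp, Dk1 p hp, Dl1 p hp, Df3 p hp, Dk3 p hp, Dl3 p hp] at h
    linear_combination (norm := (field_simp; ring)) h / 2 + Y / Pt p
end

section
/- Under the Setup, suppose additionally: Π is C³, F and A are C², K is C¹ on O; (C): (∂₁Π)² + (∂₃Π)² ≠ 0 everywhere on O; O = O₁ ∪ O₂ where O₁, O₂ are open, Ω is constant on O₁, and ρ = P = 0 on O₂; P is C¹ on O₁; and on O₁ the Euler relation ∂ⱼP = (ε+P)·(1/(2E))·(−∂ⱼf + 2(Ω/c)∂ⱼk + (Ω²/c²)∂ⱼl) holds for j = 1,3. Assume F, A, Π satisfy (N.9a), (N.9b), (N.9c) on O. Define D := (∂₁Π)² + (∂₃Π)², K̃₁ := D⁻¹·(∂₁Π·RH(Ya) + ∂₃Π·RH(Yb)) and K̃₃ := D⁻¹·(−∂₃Π·RH(Ya) + ∂₁Π·RH(Yb)), where RH(Ya) and RH(Yb) denote the right-hand sides of equations (Ya) and (Yb). Then on O the following identity holds: ∂₃K̃₁ − ∂₁K̃₃ = 2κ·e^{2(−F+K)}·P·Π·D⁻¹·[(∂₁K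 − K̃₁)·∂₃Π − (∂₃K − K̃₃)·∂₁Π]. -/
open Real

theorem ln_of {f : ℝ × ℝ → ℝ} {p : ℝ × ℝ} (v : ℝ × ℝ) (h : DifferentiableAt ℝ f p) :
    HasDerivAt (fun t : ℝ => f (p + t • v)) (fderiv ℝ f p v) 0 :=
  h.hasFDerivAt.hasLineDerivAt v

theorem ln_eq {f : ℝ × ℝ → ℝ} {p v : ℝ × ℝ} {d : ℝ} (h : DifferentiableAt ℝ f p)
    (h2 : HasDerivAt (fun t : ℝ => f (p + t • v)) d 0) : fderiv ℝ f p v = d :=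
  (ln_of v h).unique h2

theorem dv_Ya {X Y Q F F1 F3 A1 A3 : ℝ × ℝ → ℝ} {p : ℝ × ℝ} (v : ℝ × ℝ)
    (hX : DifferentiableAt ℝ X p) (hY : DifferentiableAt ℝ Y p)
    (hQ : DifferentiableAt ℝ Q p) (hF : DifferentiableAt ℝ F p)
    (hF1 : DifferentiableAt ℝ F1 p) (hF3 : DifferentiableAt ℝ F3 p)
    (hA1 : DifferentiableAt ℝ A1 p) (hA3 : DifferentiableAt ℝ A3 p) (h0 : Q p ≠ 0) :
    DifferentiableAt ℝ (fun p => (1/2) * (X p - Y p) + Q p * ((F1 p) ^ 2 - (F3 p) ^ 2)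
        - (exp (4 * F p) / (4 * Q p)) * ((A1 p) ^ 2 - (A3 p) ^ 2)) p ∧
    fderiv ℝ (fun p => (1/2) * (X p - Y p) + Q p * ((F1 p) ^ 2 - (F3 p) ^ 2)
        - (exp (4 * F p) / (4 * Q p)) * ((A1 p) ^ 2 - (A3 p) ^ 2)) p v
    = (1/2) * (fderiv ℝ X p v - fderiv ℝ Y p v)
      + fderiv ℝ Q p v * ((F1 p) ^ 2 - (F3 p) ^ 2)
      + Q p * (2 * F1 p * fderiv ℝ F1 p v - 2 * F3 p * fderiv ℝ F3 p v)
      - exp (4 * F p) * (4 * fderiv ℝ F p v / (4 * Q p) - fderiv ℝ Q p v / (4 * (Q p) ^ 2))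
          * ((A1 p) ^ 2 - (A3 p) ^ 2)
      - (exp (4 * F p) / (4 * Q p))
          * (2 * A1 p * fderiv ℝ A1 p v - 2 * A3 p * fderiv ℝ A3 p v) := by
  have h4 : (4 * Q p) ≠ 0 := by positivity
  have hd : DifferentiableAt ℝ (fun p => (1/2) * (X p - Y p) + Q p * ((F1 p) ^ 2 - (F3 p) ^ 2)
        - (exp (4 * F p) / (4 * Q p)) * ((A1 p) ^ 2 - (A3 p) ^ 2)) p := by
    fun_prop (disch := exact h4)
  refine ⟨hd, ln_eq hd ?_⟩
  have e := (((((ln_of v hX).sub (ln_of v hY)).const_mul (1/2)).add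
    ((ln_of v hQ).mul (((ln_of v hF1).pow 2).sub ((ln_of v hF3).pow 2)))).sub
    (((((ln_of v hF).const_mul 4).exp).div ((ln_of v hQ).const_mul 4) (by simpa using h0)).mul
      (((ln_of v hA1).pow 2).sub ((ln_of v hA3).pow 2))))
  refine e.congr_deriv ?_
  simp
  field_simp
  ring

theorem dv_Yb {X Q F F1 F3 A1 A3 : ℝ × ℝ → ℝ} {p : ℝ × ℝ} (v : ℝ × ℝ)
    (hX : DifferentiableAt ℝ X p)
    (hQ : DifferentiableAt ℝ Q p) (hF : DifferentiableAt ℝ F p)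
    (hF1 : DifferentiableAt ℝ F1 p) (hF3 : DifferentiableAt ℝ F3 p)
    (hA1 : DifferentiableAt ℝ A1 p) (hA3 : DifferentiableAt ℝ A3 p) (h0 : Q p ≠ 0) :
    DifferentiableAt ℝ (fun p => X p + 2 * Q p * F1 p * F3 p
        - (exp (4 * F p) / (2 * Q p)) * (A1 p * A3 p)) p ∧
    fderiv ℝ (fun p => X p + 2 * Q p * F1 p * F3 p
        - (exp (4 * F p) / (2 * Q p)) * (A1 p * A3 p)) p v
    = fderiv ℝ X p v + 2 * fderiv ℝ Q p v * F1 p * F3 p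
      + 2 * Q p * (F1 p * fderiv ℝ F3 p v + fderiv ℝ F1 p v * F3 p)
      - exp (4 * F p) * (4 * fderiv ℝ F p v / (2 * Q p) - fderiv ℝ Q p v / (2 * (Q p) ^ 2))
          * (A1 p * A3 p)
      - (exp (4 * F p) / (2 * Q p))
          * (A1 p * fderiv ℝ A3 p v + fderiv ℝ A1 p v * A3 p) := by
  have h4 : (2 * Q p) ≠ 0 := by positivity
  have hd : DifferentiableAt ℝ (fun p => X p + 2 * Q p * F1 p * F3 p
        - (exp (4 * F p) / (2 * Q p)) * (A1 p * A3 p)) p := by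
    fun_prop (disch := exact h4)
  refine ⟨hd, ln_eq hd ?_⟩
  have e := (((ln_of v hX).add
    ((((ln_of v hQ).const_mul 2).mul (ln_of v hF1)).mul (ln_of v hF3))).sub
    (((((ln_of v hF).const_mul 4).exp).div ((ln_of v hQ).const_mul 2) (by simpa using h0)).mul
      ((ln_of v hA1).mul (ln_of v hA3))))
  refine e.congr_deriv ?_
  simp
  field_simp
  ring

theorem dv_S {F K P Q : ℝ × ℝ → ℝ} {p : ℝ × ℝ} (κ : ℝ) (v : ℝ × ℝ)
    (hF : DifferentiableAt ℝ F p) (hK : DifferentiableAt ℝ K p)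
    (hP : DifferentiableAt ℝ P p) (hQ : DifferentiableAt ℝ Q p) :
    fderiv ℝ (fun p => 2 * κ * exp (2 * (-F p + K p)) * P p * Q p) p v
    = 2 * κ * exp (2 * (-F p + K p)) * (2 * (-fderiv ℝ F p v + fderiv ℝ K p v) * P p * Q p
      + fderiv ℝ P p v * Q p + P p * fderiv ℝ Q p v) := by
  refine ln_eq (by fun_prop) ?_
  have e := ((((((ln_of v hF).neg.add (ln_of v hK)).const_mul 2).exp).const_mul (2 * κ)).mul
    (ln_of v hP)).mul (ln_of v hQ)
  refine e.congr_deriv ?_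
  simp
  ring

theorem dv_f {F : ℝ × ℝ → ℝ} {p : ℝ × ℝ} (v : ℝ × ℝ) (hF : DifferentiableAt ℝ F p) :
    fderiv ℝ (fun p => exp (2 * F p)) p v = 2 * exp (2 * F p) * fderiv ℝ F p v := by
  refine ln_eq (by fun_prop) ?_
  refine ((ln_of v hF).const_mul 2).exp.congr_deriv ?_
  simp
  ring

theorem dv_k {F A : ℝ × ℝ → ℝ} {p : ℝ × ℝ} (v : ℝ × ℝ) (hF : DifferentiableAt ℝ F p)
    (hA : DifferentiableAt ℝ A p) :
    fderiv ℝ (fun p => -exp (2 * F p) * A p) p v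
    = -(2 * exp (2 * F p) * fderiv ℝ F p v * A p) - exp (2 * F p) * fderiv ℝ A p v := by
  refine ln_eq (by fun_prop) ?_
  refine (((ln_of v hF).const_mul 2).exp.neg.mul (ln_of v hA)).congr_deriv ?_
  simp
  ring

theorem dv_l {F A Q : ℝ × ℝ → ℝ} {p : ℝ × ℝ} (v : ℝ × ℝ) (hF : DifferentiableAt ℝ F p)
    (hA : DifferentiableAt ℝ A p) (hQ : DifferentiableAt ℝ Q p) :
    fderiv ℝ (fun p => -exp (2 * F p) * (A p) ^ 2 + exp (-(2 * F p)) * (Q p) ^ 2) p v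
    = -(2 * exp (2 * F p) * fderiv ℝ F p v * (A p) ^ 2)
      - exp (2 * F p) * (2 * A p * fderiv ℝ A p v)
      - 2 * fderiv ℝ F p v * exp (-(2 * F p)) * (Q p) ^ 2
      + exp (-(2 * F p)) * (2 * Q p * fderiv ℝ Q p v) := by
  refine ln_eq (by fun_prop) ?_
  refine ((((ln_of v hF).const_mul 2).exp.neg.mul ((ln_of v hA).pow 2)).add
    (((ln_of v hF).const_mul 2).neg.exp.mul ((ln_of v hQ).pow 2))).congr_deriv ?_
  simp
  ring

theorem dv_two {X Y U V : ℝ × ℝ → ℝ} {p : ℝ × ℝ} (v : ℝ × ℝ)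
    (hX : DifferentiableAt ℝ X p) (hY : DifferentiableAt ℝ Y p)
    (hU : DifferentiableAt ℝ U p) (hV : DifferentiableAt ℝ V p) :
    fderiv ℝ (fun p => X p * U p + Y p * V p) p v
    = fderiv ℝ X p v * U p + X p * fderiv ℝ U p v
      + (fderiv ℝ Y p v * V p + Y p * fderiv ℝ V p v) := by
  refine ln_eq (by fun_prop) ?_
  refine (((ln_of v hX).mul (ln_of v hU)).add ((ln_of v hY).mul (ln_of v hV))).congr_deriv ?_
  simp

theorem contDiffAt_dv {f : ℝ × ℝ → ℝ} {p : ℝ × ℝ} (v : ℝ × ℝ) (n : ℕ)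
    (h : ContDiffAt ℝ (n + 1) f p) : ContDiffAt ℝ n (fun q => fderiv ℝ f q v) p :=
  (h.fderiv_right (m := n) le_rfl).clm_apply contDiffAt_const

theorem dv_comm {f : ℝ × ℝ → ℝ} {p : ℝ × ℝ} (h : ContDiffAt ℝ 2 f p) :
    d3 (d1 f) p = d1 (d3 f) p := by
  have hd : DifferentiableAt ℝ (fderiv ℝ f) p :=
    (h.fderiv_right (m := 1) (by norm_num)).differentiableAt (by norm_num)
  have key : ∀ v w : ℝ × ℝ, fderiv ℝ (fun q => fderiv ℝ f q v) p w
      = fderiv ℝ (fderiv ℝ f) p w v := by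
    intro v w
    rw [fderiv_clm_apply hd (differentiableAt_const v)]
    simp
  have hs := (h.isSymmSndFDerivAt (by simp)) (0, 1) (1, 0)
  show fderiv ℝ (fun q => fderiv ℝ f q (1, 0)) p (0, 1)
    = fderiv ℝ (fun q => fderiv ℝ f q (0, 1)) p (1, 0)
  rw [key, key, hs]

/-- The divergence-type identity behind both components. -/
theorem alg_T (y Q Q1 Q3 F1 F3 F11 F13 F33 A1 A3 A11 A13 A33 S1 : ℝ) (hQ : Q ≠ 0)
    (TF TA : ℝ)
    (hTF : F11 + F33 + (1 / Q) * (Q1 * F1 + Q3 * F3) + (y / (2 * Q ^ 2)) * (A1 ^ 2 + A3 ^ 2) = TF)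
    (hTA : A11 + A33 - (1 / Q) * (Q1 * A1 + Q3 * A3) + 4 * (F1 * A1 + F3 * A3) = TA) :
    ((1/2) * S1 + Q1 * (F1 ^ 2 - F3 ^ 2) + Q * (2 * F1 * F11 - 2 * F3 * F13)
      - y * (4 * F1 / (4 * Q) - Q1 / (4 * Q ^ 2)) * (A1 ^ 2 - A3 ^ 2)
      - (y / (4 * Q)) * (2 * A1 * A11 - 2 * A3 * A13))
    + (2 * Q3 * F1 * F3 + 2 * Q * (F1 * F33 + F13 * F3)
      - y * (4 * F3 / (2 * Q) - Q3 / (2 * Q ^ 2)) * (A1 * A3)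
      - (y / (2 * Q)) * (A1 * A33 + A13 * A3))
    = (1/2) * S1 + 2 * F1 * Q * TF - y / (2 * Q) * A1 * TA
      - Q1 * (F1 ^ 2 + F3 ^ 2 + y / (4 * Q ^ 2) * (A1 ^ 2 + A3 ^ 2)) := by
  rw [← hTF, ← hTA]
  field_simp
  ring

/-- **Proposition 5 of the paper (consistency identity).**
Under the Setup with `Pt ∈ C³`, `F, A ∈ C²`, `K ∈ C¹`, condition (C),
`O = O₁ ∪ O₂` with `Ω` constant on `O₁` and vacuum on `O₂`, the Euler relation on `O₁`,
and the reduced equations (N.9a)(N.9b)(N.9c): with `K̃₁, K̃₃` built from the right-hand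
sides of (Ya),(Yb), one has
`∂₃K̃₁ − ∂₁K̃₃ = 2κ e^{2(−F+K)} P Pt D⁻¹ [(∂₁K − K̃₁)∂₃Pt − (∂₃K − K̃₃)∂₁Pt]` on `O`. -/
theorem stmt_5
    (c κ : ℝ) (hc : 0 < c) (hκ : 0 < κ)
    (O : Set (ℝ × ℝ)) (hO : IsOpen O) (hOw : ∀ p ∈ O, 0 < p.1)
    (F A Pt K ρ P Ω : ℝ × ℝ → ℝ)
    (hF : ContDiffOn ℝ 2 F O) (hA : ContDiffOn ℝ 2 A O)
    (hPt : ContDiffOn ℝ 3 Pt O) (hK : ContDiffOn ℝ 1 K O)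
    (hPtpos : ∀ p ∈ O, 0 < Pt p)
    (hρc : ContinuousOn ρ O) (hPc : ContinuousOn P O) (hΩc : ContinuousOn Ω O)
    (hρ0 : ∀ p ∈ O, 0 ≤ ρ p) (hP0 : ∀ p ∈ O, 0 ≤ P p)
    (ε f k m l E Sg : ℝ × ℝ → ℝ)
    (hε : ε = fun p => c ^ 2 * ρ p)
    (hf : f = fun p => exp (2 * F p))
    (hk : k = fun p => -exp (2 * F p) * A p)
    (hm : m = fun p => 2 * (-F p + K p))
    (hl : l = fun p => -exp (2 * F p) * (A p) ^ 2 + exp (-(2 * F p)) * (Pt p) ^ 2)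
    (hE : E = fun p => exp (2 * F p) * (1 + Ω p * A p / c) ^ 2
      - exp (-(2 * F p)) * (Ω p ^ 2 / c ^ 2) * (Pt p) ^ 2)
    (hEpos : ∀ p ∈ O, 0 < E p)
    (hSg : Sg = fun p => d1 f p * d1 l p + d3 f p * d3 l p + (d1 k p) ^ 2 + (d3 k p) ^ 2)
    (hC : ∀ p ∈ O, (d1 Pt p) ^ 2 + (d3 Pt p) ^ 2 ≠ 0)
    (O₁ O₂ : Set (ℝ × ℝ)) (hO₁ : IsOpen O₁) (hO₂ : IsOpen O₂) (hO12 : O = O₁ ∪ O₂)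
    (hΩconst : ∃ Ωc : ℝ, ∀ p ∈ O₁, Ω p = Ωc)
    (hvac : ∀ p ∈ O₂, ρ p = 0 ∧ P p = 0)
    (hPC1 : ContDiffOn ℝ 1 P O₁)
    (hEuler1 : ∀ p ∈ O₁, d1 P p = (ε p + P p) * (1 / (2 * E p))
      * (-(d1 f p) + 2 * (Ω p / c) * d1 k p + (Ω p ^ 2 / c ^ 2) * d1 l p))
    (hEuler3 : ∀ p ∈ O₁, d3 P p = (ε p + P p) * (1 / (2 * E p))
      * (-(d3 f p) + 2 * (Ω p / c) * d3 k p + (Ω p ^ 2 / c ^ 2) * d3 l p))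
    (hN9a : ∀ p ∈ O,
      d1 (d1 F) p + d3 (d3 F) p
        + (1 / Pt p) * (d1 Pt p * d1 F p + d3 Pt p * d3 F p)
        + (exp (4 * F p) / (2 * (Pt p) ^ 2)) * ((d1 A p) ^ 2 + (d3 A p) ^ 2)
      = (κ / 2) * exp (2 * (-F p + K p)) *
          ((ε p + P p) * (exp (2 * F p) * (1 + Ω p * A p / c) ^ 2
            + exp (-(2 * F p)) * (Ω p ^ 2 / c ^ 2) * (Pt p) ^ 2) / E p + 2 * P p))
    (hN9b : ∀ p ∈ O,
      d1 (d1 A) p + d3 (d3 A) p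
        - (1 / Pt p) * (d1 Pt p * d1 A p + d3 Pt p * d3 A p)
        + 4 * (d1 F p * d1 A p + d3 F p * d3 A p)
      = -(2 * κ) * exp (2 * (-F p + K p)) * (ε p + P p) *
          (exp (-(2 * F p)) * (Ω p / c) * (Pt p) ^ 2 * (1 + Ω p * A p / c)) / E p)
    (hN9c : ∀ p ∈ O,
      d1 (d1 Pt) p + d3 (d3 Pt) p
      = 2 * κ * exp (2 * (-F p + K p)) * P p * Pt p)
    (D RHYa RHYb Kt1 Kt3 : ℝ × ℝ → ℝ)
    (hD : D = fun p => (d1 Pt p) ^ 2 + (d3 Pt p) ^ 2)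
    (hRHYa : RHYa = fun p =>
      (1/2) * (d1 (d1 Pt) p - d3 (d3 Pt) p)
        + Pt p * ((d1 F p) ^ 2 - (d3 F p) ^ 2)
        - (exp (4 * F p) / (4 * Pt p)) * ((d1 A p) ^ 2 - (d3 A p) ^ 2))
    (hRHYb : RHYb = fun p =>
      d1 (d3 Pt) p + 2 * Pt p * d1 F p * d3 F p
        - (exp (4 * F p) / (2 * Pt p)) * (d1 A p * d3 A p))
    (hKt1 : Kt1 = fun p => (D p)⁻¹ * (d1 Pt p * RHYa p + d3 Pt p * RHYb p))
    (hKt3 : Kt3 = fun p => (D p)⁻¹ * (-(d3 Pt p) * RHYa p + d1 Pt p * RHYb p)) :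
    ∀ p ∈ O,
      d3 Kt1 p - d1 Kt3 p
      = 2 * κ * exp (2 * (-F p + K p)) * P p * Pt p * (D p)⁻¹ *
          ((d1 K p - Kt1 p) * d3 Pt p - (d3 K p - Kt3 p) * d1 Pt p) := by
  intro p hp
  have hn : O ∈ nhds p := hO.mem_nhds hp
  have cPt : ContDiffAt ℝ 3 Pt p := hPt.contDiffAt hn
  have cF : ContDiffAt ℝ 2 F p := hF.contDiffAt hn
  have cA : ContDiffAt ℝ 2 A p := hA.contDiffAt hn
  have dK : DifferentiableAt ℝ K p := (hK.contDiffAt hn).differentiableAt (by norm_num)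
  have dF : DifferentiableAt ℝ F p := cF.differentiableAt (by norm_num)
  have dA : DifferentiableAt ℝ A p := cA.differentiableAt (by norm_num)
  have dQ : DifferentiableAt ℝ Pt p := cPt.differentiableAt (by norm_num)
  have dF1 : DifferentiableAt ℝ (d1 F) p :=
    (contDiffAt_dv (1, 0) 1 (by exact_mod_cast cF)).differentiableAt (by norm_num)
  have dF3 : DifferentiableAt ℝ (d3 F) p :=
    (contDiffAt_dv (0, 1) 1 (by exact_mod_cast cF)).differentiableAt (by norm_num)
  have dA1 : DifferentiableAt ℝ (d1 A) p :=
    (contDiffAt_dv (1, 0) 1 (by exact_mod_cast cA)).differentiableAt (by norm_num)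
  have dA3 : DifferentiableAt ℝ (d3 A) p :=
    (contDiffAt_dv (0, 1) 1 (by exact_mod_cast cA)).differentiableAt (by norm_num)
  have cQ1 : ContDiffAt ℝ 2 (d1 Pt) p :=
    contDiffAt_dv (1, 0) 2 (by exact_mod_cast cPt)
  have cQ3 : ContDiffAt ℝ 2 (d3 Pt) p :=
    contDiffAt_dv (0, 1) 2 (by exact_mod_cast cPt)
  have dQ1 : DifferentiableAt ℝ (d1 Pt) p := cQ1.differentiableAt (by norm_num)
  have dQ3 : DifferentiableAt ℝ (d3 Pt) p := cQ3.differentiableAt (by norm_num)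
  have dQ11 : DifferentiableAt ℝ (d1 (d1 Pt)) p :=
    (contDiffAt_dv (1, 0) 1 (by exact_mod_cast cQ1)).differentiableAt (by norm_num)
  have dQ13 : DifferentiableAt ℝ (d1 (d3 Pt)) p :=
    (contDiffAt_dv (1, 0) 1 (by exact_mod_cast cQ3)).differentiableAt (by norm_num)
  have dQ33 : DifferentiableAt ℝ (d3 (d3 Pt)) p :=
    (contDiffAt_dv (0, 1) 1 (by exact_mod_cast cQ3)).differentiableAt (by norm_num)
  have hQ0 : Pt p ≠ 0 := (hPtpos p hp).ne'
  -- pressure: differentiable, with the Euler relation, on all of O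
  have hPP : DifferentiableAt ℝ P p ∧
      d1 P p = (ε p + P p) * (1 / (2 * E p))
        * (-(d1 f p) + 2 * (Ω p / c) * d1 k p + (Ω p ^ 2 / c ^ 2) * d1 l p) ∧
      d3 P p = (ε p + P p) * (1 / (2 * E p))
        * (-(d3 f p) + 2 * (Ω p / c) * d3 k p + (Ω p ^ 2 / c ^ 2) * d3 l p) := by
    have hp' := hp
    rw [hO12] at hp'
    rcases hp' with h | h
    · exact ⟨(hPC1.contDiffAt (hO₁.mem_nhds h)).differentiableAt (by norm_num),
        hEuler1 p h, hEuler3 p h⟩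
    · have hz : P =ᶠ[nhds p] fun _ => (0 : ℝ) := by
        filter_upwards [hO₂.mem_nhds h] with q hq using (hvac q hq).2
      have hε0 : ε p + P p = 0 := by rw [hε]; simp [(hvac p h).1, (hvac p h).2]
      have hfd : fderiv ℝ P p = 0 := by rw [hz.fderiv_eq]; simp
      refine ⟨hz.differentiableAt_iff.mpr (differentiableAt_const _), ?_, ?_⟩
      · rw [hε0]; simp [d1, hfd]
      · rw [hε0]; simp [d3, hfd]
  obtain ⟨dP, eP1, eP3⟩ := hPP
  -- symmetry of derivatives
  have sF := dv_comm cF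
  have sA := dv_comm cA
  have sQ : d3 (d1 Pt) p = d1 (d3 Pt) p := dv_comm (cPt.of_le (by norm_num))
  have sQ' : d3 (d1 Pt) =ᶠ[nhds p] d1 (d3 Pt) := by
    filter_upwards [hn] with q hq
    exact dv_comm ((hPt.contDiffAt (hO.mem_nhds hq)).of_le (by norm_num))
  have sQ1 : d1 (d1 (d3 Pt)) p = d3 (d1 (d1 Pt)) p := by
    rw [dv_comm cQ1]
    show fderiv ℝ _ p _ = fderiv ℝ _ p _
    rw [sQ'.fderiv_eq]
  have sQ3 : d3 (d1 (d3 Pt)) p = d1 (d3 (d3 Pt)) p := dv_comm cQ3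
  -- derivative of (N.9c)
  have hS : (fun q => d1 (d1 Pt) q + d3 (d3 Pt) q)
      =ᶠ[nhds p] fun q => 2 * κ * exp (2 * (-F q + K q)) * P q * Pt q := by
    filter_upwards [hn] with q hq using hN9c q hq
  have hSv : ∀ v : ℝ × ℝ, fderiv ℝ (d1 (d1 Pt)) p v + fderiv ℝ (d3 (d3 Pt)) p v
      = 2 * κ * exp (2 * (-F p + K p)) * (2 * (-fderiv ℝ F p v + fderiv ℝ K p v) * P p * Pt p
      + fderiv ℝ P p v * Pt p + P p * fderiv ℝ Pt p v) := by
    intro v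
    rw [← dv_S κ v dF dK dP dQ, ← hS.fderiv_eq, fderiv_fun_add dQ11 dQ33]
    rfl
  -- derivatives of the right-hand sides
  have a1 := dv_Ya (1, 0) dQ11 dQ33 dQ dF dF1 dF3 dA1 dA3 hQ0
  have a3 := dv_Ya (0, 1) dQ11 dQ33 dQ dF dF1 dF3 dA1 dA3 hQ0
  have b1 := dv_Yb (1, 0) dQ13 dQ dF dF1 dF3 dA1 dA3 hQ0
  have b3 := dv_Yb (0, 1) dQ13 dQ dF dF1 dF3 dA1 dA3 hQ0
  rw [← hRHYa] at a1 a3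
  rw [← hRHYb] at b1 b3
  obtain ⟨da, a1⟩ := a1
  obtain ⟨-, a3⟩ := a3
  obtain ⟨db, b1⟩ := b1
  obtain ⟨-, b3⟩ := b3
  have hDp : D p ≠ 0 := by rw [hD]; exact hC p hp
  have dD : DifferentiableAt ℝ D p := by rw [hD]; fun_prop
  have dK1 : DifferentiableAt ℝ Kt1 p := by
    rw [hKt1]; fun_prop (disch := exact hDp)
  have dK3 : DifferentiableAt ℝ Kt3 p := by
    rw [hKt3]; fun_prop (disch := exact hDp)
  have ea : RHYa =ᶠ[nhds p] fun q => d1 Pt q * Kt1 q + (-d3 Pt q) * Kt3 q := by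
    filter_upwards [hn] with q hq
    have h := hC q hq
    rw [hKt1, hKt3, hD]
    simp only
    field_simp
    ring
  have eb : RHYb =ᶠ[nhds p] fun q => d3 Pt q * Kt1 q + d1 Pt q * Kt3 q := by
    filter_upwards [hn] with q hq
    have h := hC q hq
    rw [hKt1, hKt3, hD]
    simp only
    field_simp
    ring
  have va : ∀ v : ℝ × ℝ, fderiv ℝ RHYa p v
      = fderiv ℝ (d1 Pt) p v * Kt1 p + d1 Pt p * fderiv ℝ Kt1 p v
        + (-fderiv ℝ (d3 Pt) p v * Kt3 p + (-d3 Pt p) * fderiv ℝ Kt3 p v) := by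
    intro v
    rw [ea.fderiv_eq, dv_two v dQ1 dQ3.fun_neg dK1 dK3, fderiv_fun_neg]
    rfl
  have vb : ∀ v : ℝ × ℝ, fderiv ℝ RHYb p v
      = fderiv ℝ (d3 Pt) p v * Kt1 p + d3 Pt p * fderiv ℝ Kt1 p v
        + (fderiv ℝ (d1 Pt) p v * Kt3 p + d1 Pt p * fderiv ℝ Kt3 p v) := by
    intro v
    rw [eb.fderiv_eq, dv_two v dQ3 dQ1 dK1 dK3]
  -- the Euler relation, expanded
  have f1 := dv_f (1, 0) dF
  rw [← hf] at f1
  have f3 := dv_f (0, 1) dF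
  rw [← hf] at f3
  have k1 := dv_k (1, 0) dF dA
  rw [← hk] at k1
  have k3 := dv_k (0, 1) dF dA
  rw [← hk] at k3
  have l1 := dv_l (1, 0) dF dA dQ
  rw [← hl] at l1
  have l3 := dv_l (0, 1) dF dA dQ
  rw [← hl] at l3
  have S1 := hSv (1, 0)
  have S3 := hSv (0, 1)
  have va1 := va (1, 0)
  have va3 := va (0, 1)
  have vb1 := vb (1, 0)
  have vb3 := vb (0, 1)
  have n1 : ∀ g : ℝ × ℝ → ℝ, fderiv ℝ g p (1, 0) = d1 g p := fun g => rfl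
  have n3 : ∀ g : ℝ × ℝ → ℝ, fderiv ℝ g p (0, 1) = d3 g p := fun g => rfl
  simp only [n1, n3] at a1 a3 b1 b3 f1 f3 k1 k3 l1 l3 S1 S3 va1 va3 vb1 vb3
  rw [sQ] at va3 vb3
  rw [sQ1] at b1
  rw [sQ3] at b3
  rw [sF, sA] at a3 b3
  have e9c := hN9c p hp
  have e9a := hN9a p hp
  have e9b := hN9b p hp
  have hEp := (hEpos p hp).ne'
  have T1 := alg_T (exp (4 * F p)) (Pt p) (d1 Pt p) (d3 Pt p) (d1 F p) (d3 F p)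
    (d1 (d1 F) p) (d1 (d3 F) p) (d3 (d3 F) p) (d1 A p) (d3 A p)
    (d1 (d1 A) p) (d1 (d3 A) p) (d3 (d3 A) p) (d1 (d1 (d1 Pt)) p + d1 (d3 (d3 Pt)) p)
    hQ0 _ _ e9a e9b
  have T3 := alg_T (exp (4 * F p)) (Pt p) (d3 Pt p) (d1 Pt p) (d3 F p) (d1 F p)
    (d3 (d3 F) p) (d1 (d3 F) p) (d1 (d1 F) p) (d3 A p) (d1 A p)
    (d3 (d3 A) p) (d1 (d3 A) p) (d1 (d1 A) p) (d3 (d1 (d1 Pt)) p + d3 (d3 (d3 Pt)) p)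
    hQ0 _ _ (Eq.trans (by ring) e9a) (Eq.trans (by ring) e9b)
  rw [S1] at T1
  rw [S3] at T3
  -- sums of the differentiated right-hand sides
  have U1 := Eq.trans (a := d1 RHYa p + d3 RHYb p) (by
    rw [a1, b3]
    linear_combination (1/2) * S1) T1
  have U3 := Eq.trans (a := d1 RHYb p - d3 RHYa p) (by
    rw [b1, a3]
    linear_combination (1/2) * S3) T3
  -- the source terms cancel
  have hx4 : exp (4 * F p) = exp (2 * F p) ^ 2 := by rw [← Real.exp_nat_mul]; ring_nf
  have hxi : exp (-(2 * F p)) = (exp (2 * F p))⁻¹ := Real.exp_neg _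
  have hx0 : exp (2 * F p) ≠ 0 := (Real.exp_pos _).ne'
  rw [f1, k1, l1] at eP1
  rw [f3, k3, l3] at eP3
  have hc0 : c ≠ 0 := hc.ne'
  have hSrc : d3 Pt p * (d1 RHYa p + d3 RHYb p) - d1 Pt p * (d1 RHYb p - d3 RHYa p)
      = (2 * κ * exp (2 * (-F p + K p)) * P p * Pt p) *
        (d3 Pt p * d1 K p - d1 Pt p * d3 K p) := by
    rw [U1, U3, eP1, eP3, hx4, hxi]
    generalize exp (2 * F p) = x at *
    generalize exp (2 * (-F p + K p)) = e at *
    field_simp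
    ring
  have hcurl : d3 Pt p * (d1 RHYa p + d3 RHYb p) - d1 Pt p * (d1 RHYb p - d3 RHYa p)
      = (2 * κ * exp (2 * (-F p + K p)) * P p * Pt p) * (d3 Pt p * Kt1 p - d1 Pt p * Kt3 p)
        + D p * (d3 Kt1 p - d1 Kt3 p) := by
    have hDv : D p = (d1 Pt p) ^ 2 + (d3 Pt p) ^ 2 := by rw [hD]
    rw [va1, va3, vb1, vb3, ← e9c, hDv]
    ring
  rw [hcurl] at hSrc
  field_simp
  linear_combination hSrc
end
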